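/- Let (Ω, 𝒜, μ) be a σ-finite measure space, d ∈ ℕ, and T₁,…,T_d positive Dunford–Schwartz operators. Given 1 < p ≤ 2, for every f ∈ L^p(μ) the multiparameter averages A_n(f) converge almost uniformly as n → ∞ (unrestrictedly, i.e. along the net of all n = (n₁,…,n_d) ∈ ℕ^d with every coordinate tending to ∞). -/

import Mathlib

open MeasureTheory Filter Set ENNReal Topology

variable {Ω : Type*} [MeasurableSpace Ω]

/-- `f` belongs to `L¹(μ) + L^∞(μ)`. -/
def MemL1pLinf (μ : Measure Ω) (f : Ω →ₘ[μ] ℝ) : Prop :=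
  ∃ g h : Ω →ₘ[μ] ℝ, eLpNorm g 1 μ ≠ ∞ ∧ eLpNorm h ⊤ μ ≠ ∞ ∧ f = g + h

/-- A positive Dunford–Schwartz operator: linear and positive on `L¹+L^∞`,
contracting both the `L¹`- and `L^∞`-norms. -/
structure IsPosDS (μ : Measure Ω) (T : (Ω →ₘ[μ] ℝ) → (Ω →ₘ[μ] ℝ)) : Prop where
  map_add : ∀ f g, MemL1pLinf μ f → MemL1pLinf μ g → T (f + g) = T f + T g
  map_smul : ∀ (c : ℝ) (f), MemL1pLinf μ f → T (c • f) = c • T f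
  map_pos : ∀ f, MemL1pLinf μ f → 0 ≤ f → 0 ≤ T f
  norm_one : ∀ f, MemL1pLinf μ f → eLpNorm (T f) 1 μ ≤ eLpNorm f 1 μ
  norm_top : ∀ f, MemL1pLinf μ f → eLpNorm (T f) ⊤ μ ≤ eLpNorm f ⊤ μ

/-- The Cesàro averages `A_n(f) = (1/n) ∑_{k<n} T^k f`. -/
noncomputable def cesaro (μ : Measure Ω) (T : (Ω →ₘ[μ] ℝ) → (Ω →ₘ[μ] ℝ)) (n : ℕ)
    (f : Ω →ₘ[μ] ℝ) : Ω →ₘ[μ] ℝ :=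
  (n : ℝ)⁻¹ • ∑ k ∈ Finset.range n, T^[k] f

/-- Almost uniform convergence of a net `F` to `f`. -/
def AuTendsto {ι : Type*} (μ : Measure Ω) (l : Filter ι) (F : ι → Ω →ₘ[μ] ℝ)
    (f : Ω →ₘ[μ] ℝ) : Prop :=
  ∀ ε : ℝ, 0 < ε → ∃ E : Set Ω, MeasurableSet E ∧ μ Eᶜ ≤ ENNReal.ofReal ε ∧
    Tendsto (fun i => eLpNorm (E.indicator (⇑(F i - f))) ⊤ μ) l (𝓝 0)

/-- `R_μ`: elements of `L¹+L^∞` whose distribution tails are finite. -/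
def MemRmu (μ : Measure Ω) (f : Ω →ₘ[μ] ℝ) : Prop :=
  MemL1pLinf μ f ∧ ∀ lam : ℝ, 0 < lam → μ {ω | lam < |f ω|} < ∞

/-- `T₁^{k₁} ∘ ⋯ ∘ T_d^{k_d}` for a family `T` of operators. -/
def iterComp {E : Type*} {d : ℕ} (T : Fin d → E → E) (k : Fin d → ℕ) : E → E :=
  (List.ofFn fun i => (T i)^[k i]).foldr (· ∘ ·) id

/-- The multiparameter averages
`A_n(f) = (n₁⋯n_d)⁻¹ ∑_{i₁<n₁} ⋯ ∑_{i_d<n_d} T₁^{i₁}⋯T_d^{i_d} f`. -/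
noncomputable def multiAvg (μ : Measure Ω) {d : ℕ}
    (T : Fin d → (Ω →ₘ[μ] ℝ) → (Ω →ₘ[μ] ℝ)) (n : Fin d → ℕ)
    (f : Ω →ₘ[μ] ℝ) : Ω →ₘ[μ] ℝ :=
  (∏ i, (n i : ℝ))⁻¹ •
    ∑ k ∈ Fintype.piFinset (fun i => Finset.range (n i)), iterComp T k f

/-!
Hopf's maximal inequality bounds `c * μ {2c < sup_n A_n f}` by `∫ (f - c)⁺`, and integrating over
levels (Marcinkiewicz) gives a strong `(p, p)` bound for `1 < p < ∞`. Strong bounds, unlike weak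
ones, compose, so the product averages satisfy one too, with a single majorant for all `n`.

For `f ∈ L²` the mean ergodic theorem splits `f` into a fixed vector, a coboundary `g - T g` with
`g` bounded, whose averages tend to `0` uniformly, and an `L²`-small remainder controlled by the
maximal bound. The resulting mode of convergence, domination of the tail by an `L²`-small function
plus a small constant, survives the application of the averages of a further operator: positivity
moves them inside the domination. Hence it passes to products of averages.

Since `L² ∩ Lᵖ` is dense in `Lᵖ`, the maximal bound transfers this to `Lᵖ`, and the Markov and
Borel–Cantelli lemmas turn domination into almost uniform convergence.
-/

section OrderedSpace

variable {μ : Measure Ω}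

instance instIsOrderedAddMonoidAEEqFun : IsOrderedAddMonoid (Ω →ₘ[μ] ℝ) where
  add_le_add_left f g hfg h := by
    rw [← AEEqFun.coeFn_le] at hfg ⊢
    filter_upwards [hfg, AEEqFun.coeFn_add f h, AEEqFun.coeFn_add g h] with ω h₁ h₂ h₃
    simpa only [h₂, h₃, Pi.add_apply, add_le_add_iff_right] using h₁

instance instPosSMulMonoAEEqFun : PosSMulMono ℝ (Ω →ₘ[μ] ℝ) where
  smul_le_smul_of_nonneg_left c hc f g hfg := by
    rw [← AEEqFun.coeFn_le] at hfg ⊢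
    filter_upwards [hfg, AEEqFun.coeFn_smul c f, AEEqFun.coeFn_smul c g] with ω h₁ h₂ h₃
    simpa only [h₂, h₃, Pi.smul_apply] using smul_le_smul_of_nonneg_left h₁ hc

instance instSMulPosMonoAEEqFun : SMulPosMono ℝ (Ω →ₘ[μ] ℝ) where
  smul_le_smul_of_nonneg_right f hf c c' hc := by
    rw [← sub_nonneg, ← sub_smul]
    exact smul_nonneg (sub_nonneg.2 hc) hf

theorem eLpNorm_le_eLpNorm_of_abs_le_abs {f g : Ω →ₘ[μ] ℝ} (h : |f| ≤ |g|) (p : ℝ≥0∞) :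
    eLpNorm f p μ ≤ eLpNorm g p μ := by
  rw [← AEEqFun.coeFn_le] at h
  refine eLpNorm_mono_ae ?_
  filter_upwards [h, AEEqFun.coeFn_abs f, AEEqFun.coeFn_abs g] with ω h₁ h₂ h₃
  simpa only [h₂, h₃, Real.norm_eq_abs] using h₁

theorem exists_eq_add_of_abs_le_add {α : Type*} [Lattice α] [AddCommGroup α]
    [IsOrderedAddMonoid α] {f a b : α} (ha : 0 ≤ a) (hb : 0 ≤ b) (h : |f| ≤ a + b) :
    ∃ g h : α, f = g + h ∧ |g| ≤ a ∧ |h| ≤ b := by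
  obtain ⟨hf, hf'⟩ := abs_le'.1 h
  refine ⟨f - f ⊓ b ⊔ -b, f ⊓ b ⊔ -b, (sub_add_cancel _ _).symm, abs_le'.2 ⟨?_, ?_⟩,
    abs_le'.2 ⟨sup_le inf_le_right (neg_le_self hb), neg_le.1 le_sup_right⟩⟩
  · refine sub_le_iff_le_add.2 ?_
    calc f ≤ (a + f) ⊓ (a + b) := le_inf (le_add_of_nonneg_left ha) hf
      _ = a + f ⊓ b := (add_inf f b a).symm
      _ ≤ a + (f ⊓ b ⊔ -b) := by gcongr; exact le_sup_left
  · rw [neg_sub, sub_le_iff_le_add]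
    refine sup_le (inf_le_left.trans (le_add_of_nonneg_left ha)) ?_
    rw [neg_le_iff_add_nonneg] at hf' ⊢
    rwa [add_right_comm]

/-- The space `L¹(μ) + L^∞(μ)` as a linear subspace of the space of classes of measurable
functions, so that Dunford–Schwartz operators become linear endomorphisms. -/
def L1pLinf (μ : Measure Ω) : Submodule ℝ (Ω →ₘ[μ] ℝ) :=
  Lp.LpSubmodule ℝ ℝ 1 μ ⊔ Lp.LpSubmodule ℝ ℝ ⊤ μ

theorem mem_L1pLinf {f : Ω →ₘ[μ] ℝ} : f ∈ L1pLinf μ ↔ MemL1pLinf μ f := by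
  rw [L1pLinf, Submodule.mem_sup]
  constructor
  · rintro ⟨g, hg, h, hh, rfl⟩
    exact ⟨g, h, ne_of_lt hg, ne_of_lt hh, rfl⟩
  · rintro ⟨g, h, hg, hh, rfl⟩
    exact ⟨g, hg.lt_top, h, hh.lt_top, rfl⟩

theorem mem_L1pLinf_of_abs_le_abs {f g : Ω →ₘ[μ] ℝ} (hg : g ∈ L1pLinf μ) (h : |f| ≤ |g|) :
    f ∈ L1pLinf μ := by
  obtain ⟨g₁, hg₁, g₂, hg₂, rfl⟩ := Submodule.mem_sup.1 hg
  obtain ⟨f₁, f₂, rfl, hf₁, hf₂⟩ := exists_eq_add_of_abs_le_add (abs_nonneg g₁) (abs_nonneg g₂)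
    (h.trans (abs_add_le g₁ g₂))
  exact Submodule.add_mem_sup ((eLpNorm_le_eLpNorm_of_abs_le_abs hf₁ 1).trans_lt hg₁)
    ((eLpNorm_le_eLpNorm_of_abs_le_abs hf₂ ⊤).trans_lt hg₂)

theorem sup_mem_L1pLinf {f g : Ω →ₘ[μ] ℝ} (hf : f ∈ L1pLinf μ) (hg : g ∈ L1pLinf μ) :
    f ⊔ g ∈ L1pLinf μ := by
  have h_abs {f : Ω →ₘ[μ] ℝ} (hf : f ∈ L1pLinf μ) : |f| ∈ L1pLinf μ :=
    mem_L1pLinf_of_abs_le_abs hf (abs_abs f).le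
  refine mem_L1pLinf_of_abs_le_abs (add_mem (h_abs hf) (h_abs hg)) ?_
  rw [abs_of_nonneg (a := |f| + |g|) (add_nonneg (abs_nonneg f) (abs_nonneg g)), abs_le']
  have hf_le : |f| ≤ |f| + |g| := le_add_of_nonneg_right (abs_nonneg g)
  have hg_le : |g| ≤ |f| + |g| := le_add_of_nonneg_left (abs_nonneg f)
  exact ⟨sup_le ((le_abs_self f).trans hf_le) ((le_abs_self g).trans hg_le),
    (neg_le_neg le_sup_left).trans ((neg_le_abs f).trans hf_le)⟩

theorem one_mem_L1pLinf : (1 : Ω →ₘ[μ] ℝ) ∈ L1pLinf μ :=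
  Submodule.mem_sup_right (memLp_top_const (1 : ℝ)).eLpNorm_mk_lt_top

theorem mem_L1pLinf_of_eLpNorm_ne_top {f : Ω →ₘ[μ] ℝ} {p : ℝ≥0∞} (hp : 1 ≤ p)
    (hf : eLpNorm f p μ ≠ ∞) : f ∈ L1pLinf μ := by
  obtain rfl | hp_top := eq_or_ne p ⊤
  · exact Submodule.mem_sup_right hf.lt_top
  have hp_one : 1 ≤ p.toReal := ENNReal.toReal_mono hp_top hp
  have hf_rpow : MemLp (fun ω => ‖f ω‖ ^ p.toReal) 1 μ :=
    memLp_one_iff_integrable.2 (MemLp.integrable_norm_rpow ⟨f.aestronglyMeasurable, hf.lt_top⟩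
      (one_pos.trans_le hp).ne' hp_top)
  obtain ⟨g, hg⟩ : ∃ g : Ω →ₘ[μ] ℝ, g =ᵐ[μ] fun ω => ‖f ω‖ ^ p.toReal :=
    ⟨_, AEEqFun.coeFn_mk _ hf_rpow.1⟩
  refine mem_L1pLinf_of_abs_le_abs (g := g + 1) (add_mem (Submodule.mem_sup_left ?_)
    one_mem_L1pLinf) ?_
  · exact (eLpNorm_congr_ae hg).trans_lt hf_rpow.eLpNorm_lt_top
  rw [← AEEqFun.coeFn_le]
  filter_upwards [AEEqFun.coeFn_abs f, AEEqFun.coeFn_abs (g + 1), AEEqFun.coeFn_add g 1, hg,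
    AEEqFun.coeFn_one (α := Ω) (μ := μ) (β := ℝ)] with ω h₁ h₂ h₃ h₄ h₅
  have h_nonneg : 0 ≤ ‖f ω‖ ^ p.toReal := by positivity
  rw [h₁, h₂, h₃, Pi.add_apply, h₄, h₅, Pi.one_apply, abs_of_nonneg (a := _ + _) (by linarith),
    ← Real.norm_eq_abs]
  obtain h | h := le_total ‖f ω‖ 1
  · exact h.trans (le_add_of_nonneg_left h_nonneg)
  · exact (Real.self_le_rpow_of_one_le h hp_one).trans (le_add_of_nonneg_right zero_le_one)

end OrderedSpace

namespace L1pLinf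

variable {μ : Measure Ω}

noncomputable instance instCoeFun : CoeFun (L1pLinf μ) fun _ => Ω → ℝ := ⟨fun f => (f : Ω →ₘ[μ] ℝ)⟩

noncomputable instance instOne : One (L1pLinf μ) := ⟨⟨1, one_mem_L1pLinf⟩⟩

noncomputable instance instLattice : Lattice (L1pLinf μ) :=
  Subtype.lattice
    (fun _ _ => sup_mem_L1pLinf)
    (fun f g hf hg => by
      rw [← neg_neg (f ⊓ g), neg_inf]
      exact neg_mem (sup_mem_L1pLinf (neg_mem hf) (neg_mem hg)))

theorem coeFn_le {f g : L1pLinf μ} : f ≤ᵐ[μ] g ↔ f ≤ g := AEEqFun.coeFn_le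

theorem coeFn_zero : ⇑(0 : L1pLinf μ) =ᵐ[μ] 0 := AEEqFun.coeFn_zero

theorem coeFn_one : ⇑(1 : L1pLinf μ) =ᵐ[μ] 1 := AEEqFun.coeFn_one

instance instZeroLEOneClass : ZeroLEOneClass (L1pLinf μ) where
  zero_le_one := by
    rw [← coeFn_le]
    filter_upwards [coeFn_zero, coeFn_one] with ω h₀ h₁
    simp only [h₀, h₁, Pi.zero_apply, Pi.one_apply, zero_le_one]

instance instIsOrderedAddMonoid : IsOrderedAddMonoid (L1pLinf μ) where
  add_le_add_left _ _ hfg h := add_le_add_left (α := Ω →ₘ[μ] ℝ) hfg h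

instance instPosSMulMono : PosSMulMono ℝ (L1pLinf μ) where
  smul_le_smul_of_nonneg_left _ hc _ _ hfg := smul_le_smul_of_nonneg_left (β := Ω →ₘ[μ] ℝ) hfg hc

instance instSMulPosMono : SMulPosMono ℝ (L1pLinf μ) where
  smul_le_smul_of_nonneg_right _ hf _ _ hc := smul_le_smul_of_nonneg_right (β := Ω →ₘ[μ] ℝ) hc hf

theorem coeFn_add (f g : L1pLinf μ) : ⇑(f + g) =ᵐ[μ] f + g := AEEqFun.coeFn_add _ _

theorem coeFn_sub (f g : L1pLinf μ) : ⇑(f - g) =ᵐ[μ] f - g := AEEqFun.coeFn_sub _ _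

theorem coeFn_smul (c : ℝ) (f : L1pLinf μ) : ⇑(c • f) =ᵐ[μ] c • ⇑f := AEEqFun.coeFn_smul _ _

theorem coeFn_add_smul_one (f : L1pLinf μ) (c : ℝ) :
    ⇑(f + c • 1) =ᵐ[μ] fun ω => f ω + c := by
  filter_upwards [coeFn_add f (c • 1), coeFn_smul c 1, coeFn_one] with ω h₁ h₂ h₃
  rw [h₁, Pi.add_apply, h₂, Pi.smul_apply, h₃, Pi.one_apply, smul_eq_mul, mul_one]

theorem coeFn_nonneg {f : L1pLinf μ} : 0 ≤ᵐ[μ] f ↔ 0 ≤ f := by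
  rw [← coeFn_le]
  exact eventually_congr (coeFn_zero.mono fun ω hω => by rw [hω])

theorem coeFn_abs (f : L1pLinf μ) : ⇑|f| =ᵐ[μ] fun ω => |f ω| := AEEqFun.coeFn_abs _

theorem coeFn_posPart (f : L1pLinf μ) : ⇑f⁺ =ᵐ[μ] fun ω => (f ω)⁺ := by
  filter_upwards [AEEqFun.coeFn_sup (f : Ω →ₘ[μ] ℝ) 0, AEEqFun.coeFn_zero (β := ℝ)] with ω h₁ h₂
  rw [posPart_def, posPart_def]
  exact h₁.trans (congrArg _ h₂)

theorem coeFn_posPart_sub_smul_one (f : L1pLinf μ) (c : ℝ) :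
    ⇑(f - c • 1)⁺ =ᵐ[μ] fun ω => (f ω - c)⁺ := by
  filter_upwards [coeFn_posPart (f - c • 1), coeFn_sub f (c • 1), coeFn_smul c 1, coeFn_one]
    with ω h₁ h₂ h₃ h₄
  rw [h₁, h₂, Pi.sub_apply, h₃, Pi.smul_apply, h₄, Pi.one_apply, smul_eq_mul, mul_one]

theorem eLpNorm_abs (f : L1pLinf μ) (p : ℝ≥0∞) : eLpNorm ⇑|f| p μ = eLpNorm f p μ := by
  rw [eLpNorm_congr_ae (coeFn_abs f)]
  exact eLpNorm_norm f

theorem eLpNorm_add_le (f g : L1pLinf μ) {p : ℝ≥0∞} (hp : 1 ≤ p) :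
    eLpNorm ⇑(f + g) p μ ≤ eLpNorm f p μ + eLpNorm g p μ := by
  rw [eLpNorm_congr_ae (coeFn_add f g)]
  exact MeasureTheory.eLpNorm_add_le f.1.aestronglyMeasurable g.1.aestronglyMeasurable hp

theorem eLpNorm_smul (c : ℝ) (f : L1pLinf μ) (p : ℝ≥0∞) :
    eLpNorm ⇑(c • f) p μ = ‖c‖ₑ * eLpNorm f p μ := by
  rw [eLpNorm_congr_ae (coeFn_smul c f), eLpNorm_const_smul]

theorem eLpNorm_sum_le {ι : Type*} (s : Finset ι) (f : ι → L1pLinf μ) {p : ℝ≥0∞} (hp : 1 ≤ p) :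
    eLpNorm ⇑(∑ i ∈ s, f i) p μ ≤ ∑ i ∈ s, eLpNorm (f i) p μ :=
  Finset.le_sum_of_subadditive (fun f : L1pLinf μ => eLpNorm f p μ)
    (by rw [eLpNorm_congr_ae coeFn_zero, eLpNorm_zero]) (fun f g => eLpNorm_add_le f g hp) s f

theorem integrable_partialSups {f : ℕ → L1pLinf μ} (hf : ∀ k, Integrable (f k) μ) (n : ℕ) :
    Integrable (partialSups f n) μ := by
  induction n with
  | zero => exact hf 0
  | succ n ih =>
    rw [partialSups_add_one]
    exact (ih.sup (hf (n + 1))).congr (AEEqFun.coeFn_sup _ _).symm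

theorem abs_le_smul_one_iff {f : L1pLinf μ} {c : ℝ} (hc : 0 ≤ c) :
    |f| ≤ c • 1 ↔ eLpNorm f ⊤ μ ≤ ENNReal.ofReal c := by
  have h_ae : |f| ≤ c • 1 ↔ ∀ᵐ ω ∂μ, ‖f ω‖ₑ ≤ ENNReal.ofReal c := by
    rw [← coeFn_le]
    refine eventually_congr ?_
    filter_upwards [coeFn_abs f, coeFn_smul c 1, coeFn_one] with ω h₁ h₂ h₃
    rw [h₁, h₂, Pi.smul_apply, h₃, Pi.one_apply, smul_eq_mul, mul_one, Real.enorm_eq_ofReal_abs,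
      ENNReal.ofReal_le_ofReal_iff hc]
  rw [h_ae, eLpNorm_exponent_top]
  exact ⟨eLpNormEssSup_le_of_ae_enorm_bound,
    fun h => ae_le_eLpNormEssSup.mono fun ω hω => hω.trans h⟩

theorem exists_ae_eq_of_memLp {f : Ω → ℝ} {p : ℝ≥0∞} (hp : 1 ≤ p) (hf : MemLp f p μ) :
    ∃ g : L1pLinf μ, g =ᵐ[μ] f :=
  ⟨⟨_, mem_L1pLinf_of_eLpNorm_ne_top hp hf.eLpNorm_mk_lt_top.ne⟩, AEEqFun.coeFn_mk f hf.1⟩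

end L1pLinf

section DunfordSchwartz

variable {μ : Measure Ω}

theorem abs_map_le_map_abs {α β F : Type*} [Lattice α] [AddCommGroup α] [Lattice β]
    [AddCommGroup β] [FunLike F α β] [AddMonoidHomClass F α β] {A : F}
    (hA : Monotone A) (f : α) : |A f| ≤ A |f| :=
  abs_le'.2 ⟨hA (le_abs_self f), by rw [← map_neg]; exact hA (neg_le_abs f)⟩

/-- Positive Dunford–Schwartz operators, bundled as linear endomorphisms of `L¹(μ) + L^∞(μ)`;
positivity is encoded as monotonicity. -/
structure IsDunfordSchwartz (T : Module.End ℝ (L1pLinf μ)) : Prop where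
  monotone : Monotone T
  eLpNorm_one_le : ∀ f, eLpNorm (T f) 1 μ ≤ eLpNorm f 1 μ
  eLpNorm_top_le : ∀ f, eLpNorm (T f) ⊤ μ ≤ eLpNorm f ⊤ μ

theorem IsPosDS.apply_mem_L1pLinf {T : (Ω →ₘ[μ] ℝ) → (Ω →ₘ[μ] ℝ)} (hT : IsPosDS μ T)
    {f : Ω →ₘ[μ] ℝ} (hf : f ∈ L1pLinf μ) : T f ∈ L1pLinf μ := by
  obtain ⟨g, hg, h, hh, rfl⟩ := Submodule.mem_sup.1 hf
  have hg' := mem_L1pLinf.1 (Submodule.mem_sup_left hg)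
  have hh' := mem_L1pLinf.1 (Submodule.mem_sup_right hh)
  rw [hT.map_add g h hg' hh']
  exact Submodule.add_mem_sup ((hT.norm_one g hg').trans_lt hg) ((hT.norm_top h hh').trans_lt hh)

theorem IsPosDS.exists_isDunfordSchwartz {T : (Ω →ₘ[μ] ℝ) → (Ω →ₘ[μ] ℝ)} (hT : IsPosDS μ T) :
    ∃ S : Module.End ℝ (L1pLinf μ), IsDunfordSchwartz S ∧
      ∀ f : L1pLinf μ, (S f : Ω →ₘ[μ] ℝ) = T f := by
  have h_mem (f : L1pLinf μ) : MemL1pLinf μ (f : Ω →ₘ[μ] ℝ) := mem_L1pLinf.1 f.2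
  let S : Module.End ℝ (L1pLinf μ) :=
    { toFun := fun f => ⟨T f, hT.apply_mem_L1pLinf f.2⟩
      map_add' := fun f g => Subtype.ext (hT.map_add f g (h_mem f) (h_mem g))
      map_smul' := fun c f => Subtype.ext (hT.map_smul c f (h_mem f)) }
  refine ⟨S, ⟨fun f g hfg => ?_, fun f => hT.norm_one f (h_mem f),
    fun f => hT.norm_top f (h_mem f)⟩, fun f => rfl⟩
  rw [← sub_nonneg, ← map_sub]
  exact hT.map_pos _ (h_mem (g - f)) (sub_nonneg.2 hfg)

namespace IsDunfordSchwartz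

variable {T : Module.End ℝ (L1pLinf μ)}

protected theorem pow (hT : IsDunfordSchwartz T) (k : ℕ) : IsDunfordSchwartz (T ^ k) := by
  induction k with
  | zero => exact ⟨monotone_id, fun _ => le_rfl, fun _ => le_rfl⟩
  | succ k ih =>
    rw [pow_succ']
    exact ⟨hT.monotone.comp ih.monotone,
      fun f => (hT.eLpNorm_one_le _).trans (ih.eLpNorm_one_le f),
      fun f => (hT.eLpNorm_top_le _).trans (ih.eLpNorm_top_le f)⟩

theorem map_one_le (hT : IsDunfordSchwartz T) : T 1 ≤ 1 := by
  have h_norm : eLpNorm (T 1) ⊤ μ ≤ ENNReal.ofReal 1 :=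
    (hT.eLpNorm_top_le 1).trans ((L1pLinf.abs_le_smul_one_iff zero_le_one).1
      (by rw [one_smul, abs_of_nonneg zero_le_one]))
  rw [← L1pLinf.abs_le_smul_one_iff zero_le_one, one_smul] at h_norm
  exact (le_abs_self _).trans h_norm

theorem integrable_map (hT : IsDunfordSchwartz T) {f : L1pLinf μ} (hf : Integrable f μ) :
    Integrable (T f) μ :=
  memLp_one_iff_integrable.1 ⟨(T f).1.aestronglyMeasurable,
    (hT.eLpNorm_one_le f).trans_lt (memLp_one_iff_integrable.2 hf).2⟩

theorem integral_map_le (hT : IsDunfordSchwartz T) {f : L1pLinf μ} (hf : Integrable f μ)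
    (hf_nonneg : 0 ≤ f) : ∫ ω, T f ω ∂μ ≤ ∫ ω, f ω ∂μ := by
  have hTf_nonneg : 0 ≤ T f := map_zero T ▸ hT.monotone hf_nonneg
  have h_integral {g : L1pLinf μ} (hg : 0 ≤ g) : ∫ ω, g ω ∂μ = (eLpNorm g 1 μ).toReal := by
    rw [eLpNorm_one_eq_lintegral_enorm, ← integral_norm_eq_lintegral_enorm g.1.aestronglyMeasurable]
    refine integral_congr_ae ?_
    filter_upwards [L1pLinf.coeFn_nonneg.2 hg] with ω hω using (Real.norm_of_nonneg hω).symm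
  rw [h_integral hf_nonneg, h_integral hTf_nonneg]
  exact ENNReal.toReal_mono (memLp_one_iff_integrable.2 hf).eLpNorm_ne_top (hT.eLpNorm_one_le f)

theorem setIntegral_pos_nonneg (hT : IsDunfordSchwartz T) {u M : L1pLinf μ}
    (hu : Integrable u μ) (hM : Integrable M μ) (hM_nonneg : 0 ≤ M)
    (hM_le : M ≤ (u + T M)⁺) : 0 ≤ ∫ ω in {ω | 0 < M ω}, u ω ∂μ := by
  have hTM := hT.integrable_map hM
  have h_meas : NullMeasurableSet {ω | 0 < M ω} μ :=
    nullMeasurableSet_lt aemeasurable_const M.1.aemeasurable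
  have hTM_nonneg : 0 ≤ T M := map_zero T ▸ hT.monotone hM_nonneg
  calc 0 ≤ ∫ ω, M ω ∂μ - ∫ ω, T M ω ∂μ := sub_nonneg.2 (hT.integral_map_le hM hM_nonneg)
    _ = ∫ ω, M ω - T M ω ∂μ := (integral_sub hM hTM).symm
    _ ≤ ∫ ω, {ω | 0 < M ω}.indicator u ω ∂μ := by
        refine integral_mono_ae (hM.sub hTM) (hu.indicator₀ h_meas) ?_
        filter_upwards [L1pLinf.coeFn_le.2 hM_le, L1pLinf.coeFn_posPart (u + T M),
          L1pLinf.coeFn_add u (T M), L1pLinf.coeFn_nonneg.2 hTM_nonneg,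
          L1pLinf.coeFn_nonneg.2 hM_nonneg] with ω h_le h_pos h_add hT0 hM0
        rw [h_pos, h_add, Pi.add_apply] at h_le
        by_cases hω : 0 < M ω
        · rw [indicator_of_mem (by exact hω), sub_le_iff_le_add,
            ← posPart_eq_of_posPart_pos (hω.trans_le h_le)]
          exact h_le
        · rw [indicator_of_notMem (by exact hω), le_antisymm (not_lt.1 hω) hM0, zero_sub]
          exact neg_nonpos.2 hT0
    _ = ∫ ω in {ω | 0 < M ω}, u ω ∂μ := integral_indicator₀ h_meas

end IsDunfordSchwartz

end DunfordSchwartz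

section Hopf

/-- The Cesàro average `n⁻¹ (1 + T + ⋯ + T^(n-1))` as an element of the endomorphism algebra, so
that multiparameter averages are products of these; it is `0` for `n = 0`. -/
noncomputable def cesaroAverage {E : Type*} [AddCommGroup E] [Module ℝ E] (T : Module.End ℝ E)
    (n : ℕ) : Module.End ℝ E :=
  (n : ℝ)⁻¹ • ∑ k ∈ Finset.range n, T ^ k

theorem cesaroAverage_apply {E : Type*} [AddCommGroup E] [Module ℝ E] (T : Module.End ℝ E)
    (n : ℕ) (f : E) : cesaroAverage T n f = (n : ℝ)⁻¹ • ∑ k ∈ Finset.range n, (T ^ k) f := by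
  rw [cesaroAverage, LinearMap.smul_apply, LinearMap.sum_apply]

theorem partialSups_sum_pow_le_posPart {E : Type*} [Lattice E] [AddCommGroup E]
    [IsOrderedAddMonoid E] [Module ℝ E] {T : Module.End ℝ E} (hT : Monotone T) (u : E) (n : ℕ) :
    partialSups (fun k => ∑ j ∈ Finset.range k, (T ^ j) u) n ≤
      (u + T (partialSups (fun k => ∑ j ∈ Finset.range k, (T ^ j) u) n))⁺ := by
  refine partialSups_le _ _ _ fun k hk => ?_
  cases k with
  | zero => exact posPart_nonneg _
  | succ k =>
    refine le_trans ?_ (le_posPart _)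
    have h_succ : ∑ j ∈ Finset.range (k + 1), (T ^ j) u
        = u + T (∑ j ∈ Finset.range k, (T ^ j) u) := by
      simp only [Finset.sum_range_succ', pow_succ', map_sum, Module.End.mul_apply, pow_zero,
        Module.End.one_apply, add_comm]
    rw [h_succ]
    gcongr
    exact hT (le_partialSups_of_le (fun k => ∑ j ∈ Finset.range k, (T ^ j) u)
      ((Nat.le_succ k).trans hk))

variable {μ : Measure Ω} {T : Module.End ℝ (L1pLinf μ)}

theorem eLpNorm_cesaroAverage_le {p : ℝ≥0∞} (hp : 1 ≤ p)
    (hT : ∀ k f, eLpNorm ((T ^ k) f) p μ ≤ eLpNorm f p μ) (n : ℕ) (f : L1pLinf μ) :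
    eLpNorm (cesaroAverage T n f) p μ ≤ eLpNorm f p μ := by
  rw [cesaroAverage_apply, L1pLinf.eLpNorm_smul]
  calc _ ≤ ‖(n : ℝ)⁻¹‖ₑ * ∑ k ∈ Finset.range n, eLpNorm ((T ^ k) f) p μ := by
        gcongr; exact L1pLinf.eLpNorm_sum_le _ _ hp
    _ ≤ ‖(n : ℝ)⁻¹‖ₑ * ∑ _k ∈ Finset.range n, eLpNorm f p μ := by gcongr; exact hT _ _
    _ ≤ eLpNorm f p μ := by
        rw [Finset.sum_const, Finset.card_range, nsmul_eq_mul, ← mul_assoc]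
        refine mul_le_of_le_one_left' ?_
        rw [Real.enorm_eq_ofReal (by positivity), ← ENNReal.ofReal_natCast,
          ← ENNReal.ofReal_mul (by positivity)]
        exact ENNReal.ofReal_le_one.2 (inv_mul_le_one_of_le₀ le_rfl (by positivity))

namespace IsDunfordSchwartz

protected theorem cesaroAverage (hT : IsDunfordSchwartz T) (n : ℕ) :
    IsDunfordSchwartz (cesaroAverage T n) where
  monotone f g hfg := by
    simp only [cesaroAverage_apply]
    gcongr
    exact (hT.pow _).monotone hfg
  eLpNorm_one_le := eLpNorm_cesaroAverage_le le_rfl (fun k => (hT.pow k).eLpNorm_one_le) n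
  eLpNorm_top_le := eLpNorm_cesaroAverage_le le_top (fun k => (hT.pow k).eLpNorm_top_le) n

theorem map_le_add_smul_one (hT : IsDunfordSchwartz T) {f g : L1pLinf μ} {c : ℝ} (hc : 0 ≤ c)
    (h : f ≤ g + c • 1) : T f ≤ T g + c • 1 :=
  calc T f ≤ T (g + c • 1) := hT.monotone h
    _ = T g + c • T 1 := by rw [map_add, map_smul]
    _ ≤ T g + c • 1 := by gcongr; exact hT.map_one_le

theorem integral_nonneg_of_partialSups (hT : IsDunfordSchwartz T) {u : L1pLinf μ}
    (hu : Integrable u μ) (n : ℕ)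
    (h : ∀ᵐ ω ∂μ, partialSups (fun k => ∑ j ∈ Finset.range k, (T ^ j) u) n ω ≤ 0 → 0 ≤ u ω) :
    0 ≤ ∫ ω, u ω ∂μ := by
  set S : ℕ → L1pLinf μ := fun k => ∑ j ∈ Finset.range k, (T ^ j) u
  have hS : ∀ k, Integrable (S k) μ := fun k =>
    Finset.sum_induction _ (fun f : L1pLinf μ => Integrable f μ)
      (fun f g hf hg => (hf.add hg).congr (L1pLinf.coeFn_add f g).symm)
      ((integrable_zero Ω ℝ μ).congr L1pLinf.coeFn_zero.symm)
      (fun j _ => (hT.pow j).integrable_map hu)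
  have h_meas : MeasurableSet {ω | 0 < partialSups S n ω} :=
    measurableSet_lt measurable_const (partialSups S n).1.measurable
  rw [← integral_add_compl h_meas hu]
  refine add_nonneg (hT.setIntegral_pos_nonneg hu (L1pLinf.integrable_partialSups hS n)
    (le_partialSups_of_le S n.zero_le) (partialSups_sum_pow_le_posPart hT.monotone u n)) ?_
  exact setIntegral_nonneg_ae h_meas.compl (h.mono fun ω hω hωS => hω (not_lt.1 hωS))

theorem partialSups_cesaroAverage_le (hT : IsDunfordSchwartz T) {u v : L1pLinf μ} {c : ℝ}
    (hc : 0 ≤ c) (h : v ≤ u + c • 1) (n : ℕ) :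
    partialSups (fun k => cesaroAverage T k v) n ≤
      partialSups (fun k => ∑ j ∈ Finset.range k, (T ^ j) u) n + c • 1 := by
  refine partialSups_le _ _ _ fun k hk => ?_
  set S : ℕ → L1pLinf μ := fun k => ∑ j ∈ Finset.range k, (T ^ j) u
  have h_nonneg : 0 ≤ partialSups S n := le_partialSups_of_le S n.zero_le
  calc cesaroAverage T k v ≤ cesaroAverage T k u + c • 1 :=
        (hT.cesaroAverage k).map_le_add_smul_one hc h
    _ = (k : ℝ)⁻¹ • S k + c • 1 := by rw [cesaroAverage_apply]
    _ ≤ (k : ℝ)⁻¹ • partialSups S n + c • 1 := by gcongr; exact le_partialSups_of_le S hk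
    _ ≤ (1 : ℝ) • partialSups S n + c • 1 := by gcongr; exact Nat.cast_inv_le_one k
    _ = partialSups S n + c • 1 := by rw [one_smul]

theorem mul_measure_lt_partialSups_le (hT : IsDunfordSchwartz T) {v : L1pLinf μ}
    (hv : Integrable v μ) (hv_nonneg : 0 ≤ v) {c : ℝ} (hc : 0 < c) (n : ℕ) :
    ENNReal.ofReal c * μ {ω | c < partialSups (fun k => cesaroAverage T k v) n ω} ≤
      ENNReal.ofReal (∫ ω, v ω ∂μ) := by
  set V := partialSups (fun k => cesaroAverage T k v) n
  have hV : Integrable V μ :=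
    L1pLinf.integrable_partialSups (fun k => (hT.cesaroAverage k).integrable_map hv) n
  have hF_meas : MeasurableSet {ω | c < V ω} := measurableSet_lt measurable_const V.1.measurable
  have hF_fin : μ {ω | c < V ω} < ∞ := hV.measure_gt_lt_top hc
  set F := {ω | c < V ω}
  obtain ⟨φ, hφ⟩ := L1pLinf.exists_ae_eq_of_memLp le_rfl
    (memLp_indicator_const 1 hF_meas (1 : ℝ) (.inr hF_fin.ne))
  have hφ_le : φ ≤ 1 := by
    rw [← L1pLinf.coeFn_le]
    filter_upwards [hφ, L1pLinf.coeFn_one] with ω h₁ h₂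
    rw [h₁, h₂]
    exact indicator_le_self' (fun _ _ => zero_le_one) ω
  set M := partialSups (fun k => ∑ j ∈ Finset.range k, (T ^ j) (v - c • φ)) n
  have hVM : V ≤ M + c • 1 := hT.partialSups_cesaroAverage_le hc.le
    (sub_le_iff_le_add.1 (sub_le_sub_left (smul_le_smul_of_nonneg_left hφ_le hc.le) v)) n
  have h_ind : Integrable (fun ω => c * F.indicator 1 ω) μ :=
    ((integrable_indicator_iff hF_meas).2 (integrableOn_const hF_fin.ne)).const_mul c
  have hu : ⇑(v - c • φ) =ᵐ[μ] fun ω => v ω - c * F.indicator 1 ω := by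
    filter_upwards [L1pLinf.coeFn_sub v (c • φ), L1pLinf.coeFn_smul c φ, hφ] with ω h₁ h₂ h₃
    rw [h₁, Pi.sub_apply, h₂, Pi.smul_apply, h₃, smul_eq_mul, Pi.one_def]
  have hopf : 0 ≤ ∫ ω, (v - c • φ) ω ∂μ := by
    refine hT.integral_nonneg_of_partialSups ((hv.sub h_ind).congr hu.symm) n ?_
    filter_upwards [hu, L1pLinf.coeFn_nonneg.2 hv_nonneg, L1pLinf.coeFn_le.2 hVM,
      L1pLinf.coeFn_add_smul_one M c] with ω h_eq hv0 h_le h_add hω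
    have hωF : ω ∉ F := fun h : c < V ω => by rw [h_add] at h_le; linarith
    rw [h_eq, indicator_of_notMem hωF, mul_zero, sub_zero]
    exact hv0
  rw [integral_congr_ae hu, integral_sub hv h_ind, integral_const_mul,
    integral_indicator_one hF_meas, sub_nonneg] at hopf
  rw [← ofReal_measureReal hF_fin.ne, ← ENNReal.ofReal_mul hc.le]
  exact ENNReal.ofReal_le_ofReal hopf

theorem mul_measure_two_mul_lt_partialSups_le (hT : IsDunfordSchwartz T) {f : L1pLinf μ}
    {c : ℝ} (hc : 0 < c) (n : ℕ) :
    ENNReal.ofReal c * μ {ω | 2 * c < partialSups (fun k => cesaroAverage T k f) n ω} ≤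
      ∫⁻ ω, ENNReal.ofReal (f ω - c) ∂μ := by
  obtain h_top | h_fin := eq_or_ne (∫⁻ ω, ENNReal.ofReal (f ω - c) ∂μ) ∞
  · exact h_top ▸ le_top
  have hg := L1pLinf.coeFn_posPart_sub_smul_one f c
  set g := (f - c • 1)⁺
  have hg_nonneg : 0 ≤ᵐ[μ] g := L1pLinf.coeFn_nonneg.2 (posPart_nonneg _)
  have hg_lintegral : ∫⁻ ω, ENNReal.ofReal (g ω) ∂μ = ∫⁻ ω, ENNReal.ofReal (f ω - c) ∂μ := by
    refine lintegral_congr_ae (hg.mono fun ω hω => ?_)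
    simp only [hω, posPart_def, ENNReal.ofReal_max, ENNReal.ofReal_zero, zero_le, sup_of_le_left]
  have hg_int : Integrable g μ := by
    refine ⟨g.1.aestronglyMeasurable, (hasFiniteIntegral_iff_ofReal hg_nonneg).2 ?_⟩
    exact hg_lintegral ▸ h_fin.lt_top
  have h_le : partialSups (fun k => cesaroAverage T k f) n ≤
      partialSups (fun k => cesaroAverage T k g) n + c • 1 := by
    refine partialSups_le _ _ _ fun k hk => ?_
    refine ((hT.cesaroAverage k).map_le_add_smul_one hc.le
      (sub_le_iff_le_add.1 (le_posPart _))).trans ?_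
    gcongr
    exact le_partialSups_of_le (fun k => cesaroAverage T k g) hk
  calc _ ≤ ENNReal.ofReal c * μ {ω | c < partialSups (fun k => cesaroAverage T k g) n ω} := by
        gcongr 1
        refine measure_mono_ae ?_
        filter_upwards [L1pLinf.coeFn_le.2 h_le, L1pLinf.coeFn_add_smul_one
          (partialSups (fun k => cesaroAverage T k g) n) c] with ω h₁ h₂ (hω : 2 * c < _)
        change c < _
        linarith
    _ ≤ ENNReal.ofReal (∫ ω, g ω ∂μ) :=
        hT.mul_measure_lt_partialSups_le hg_int (posPart_nonneg _) hc n
    _ = ∫⁻ ω, ENNReal.ofReal (f ω - c) ∂μ := by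
        rw [← hg_lintegral, ofReal_integral_eq_lintegral_ofReal hg_int hg_nonneg]

end IsDunfordSchwartz

end Hopf

section LayerCake

theorem lintegral_ofReal_sub_eq_lintegral_meas_lt {μ : Measure Ω} {f : Ω → ℝ}
    (hf : AEMeasurable f μ) (c : ℝ) :
    ∫⁻ ω, ENNReal.ofReal (f ω - c) ∂μ = ∫⁻ s in Ioi c, μ {ω | s < f ω} :=
  calc ∫⁻ ω, ENNReal.ofReal (f ω - c) ∂μ
      = ∫⁻ ω, ENNReal.ofReal (max (f ω - c) 0) ∂μ := by
        simp only [ENNReal.ofReal_max, ENNReal.ofReal_zero, zero_le, sup_of_le_left]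
    _ = ∫⁻ t in Ioi 0, μ {ω | t < max (f ω - c) 0} :=
        lintegral_eq_lintegral_meas_lt μ (.of_forall fun ω => le_max_right _ _)
          ((hf.sub_const c).max aemeasurable_const)
    _ = ∫⁻ t in (· + c) ⁻¹' Ioi c, μ {ω | t + c < f ω} := by
        rw [Set.preimage_add_const_Ioi, sub_self]
        refine setLIntegral_congr_fun measurableSet_Ioi fun t (ht : 0 < t) => ?_
        simp only [lt_max_iff, ht.not_gt, or_false, lt_sub_iff_add_lt]
    _ = ∫⁻ s in Ioi c, μ {ω | s < f ω} :=
        (measurePreserving_add_right volume c).setLIntegral_comp_preimage_emb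
          (measurableEmbedding_addRight c) (fun s => μ {ω | s < f ω}) (Ioi c)

theorem lintegral_Ioi_mul_lintegral_Ioi {a m : ℝ → ℝ≥0∞} (ha : Measurable a) (hm : Measurable m) :
    ∫⁻ c in Ioi 0, a c * ∫⁻ s in Ioi c, m s = ∫⁻ s in Ioi 0, m s * ∫⁻ c in Ioo 0 s, a c := by
  have h_meas : Measurable (fun x : ℝ × ℝ => {x : ℝ × ℝ | x.1 < x.2}.indicator
      (fun x => a x.1 * m x.2) x) :=
    ((ha.comp measurable_fst).mul (hm.comp measurable_snd)).indicator
      (measurableSet_lt measurable_fst measurable_snd)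
  calc ∫⁻ c in Ioi 0, a c * ∫⁻ s in Ioi c, m s
      = ∫⁻ c in Ioi 0, ∫⁻ s in Ioi 0, (Ioi c).indicator (fun s => a c * m s) s := by
        refine setLIntegral_congr_fun measurableSet_Ioi fun c (hc : 0 < c) => ?_
        rw [setLIntegral_indicator measurableSet_Ioi, Ioi_inter_Ioi, max_eq_left hc.le,
          lintegral_const_mul _ hm]
    _ = ∫⁻ s in Ioi 0, ∫⁻ c in Ioi 0, (Iio s).indicator (fun c => a c * m s) c :=
        lintegral_lintegral_swap h_meas.aemeasurable
    _ = ∫⁻ s in Ioi 0, m s * ∫⁻ c in Ioo 0 s, a c := by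
        refine lintegral_congr fun s => ?_
        rw [setLIntegral_indicator measurableSet_Iio, Iio_inter_Ioi, lintegral_mul_const _ ha,
          mul_comm]

theorem lintegral_Ioo_ofReal_rpow {r s : ℝ} (hr : -1 < r) (hs : 0 ≤ s) :
    ∫⁻ c in Ioo 0 s, ENNReal.ofReal (c ^ r) = ENNReal.ofReal (s ^ (r + 1) / (r + 1)) := by
  have h_int := intervalIntegral.intervalIntegrable_rpow' (a := 0) (b := s) hr
  rw [intervalIntegrable_iff_integrableOn_Ioo_of_le hs] at h_int
  rw [← ofReal_integral_eq_lintegral_ofReal h_int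
    (ae_restrict_of_forall_mem measurableSet_Ioo fun c hc => Real.rpow_nonneg hc.1.le r),
    ← integral_Ioc_eq_integral_Ioo, ← intervalIntegral.integral_of_le hs,
    integral_rpow (.inl hr), Real.zero_rpow (by linarith), sub_zero]

theorem lintegral_rpow_le_of_mul_meas_lt_le {μ : Measure Ω} {f F : Ω → ℝ} (hf : AEMeasurable f μ)
    (hF : AEMeasurable F μ) (hf_nonneg : 0 ≤ᵐ[μ] f) (hF_nonneg : 0 ≤ᵐ[μ] F)
    (h : ∀ c : ℝ, 0 < c →
      ENNReal.ofReal c * μ {ω | c < F ω} ≤ ∫⁻ ω, ENNReal.ofReal (f ω - c) ∂μ)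
    {p : ℝ} (hp : 1 < p) :
    ∫⁻ ω, ENNReal.ofReal (F ω ^ p) ∂μ ≤
      ENNReal.ofReal (p - 1)⁻¹ * ∫⁻ ω, ENNReal.ofReal (f ω ^ p) ∂μ := by
  have hm : Measurable fun s : ℝ => μ {ω | s < f ω} :=
    Antitone.measurable fun s t hst => measure_mono fun ω (hω : t < f ω) => hst.trans_lt hω
  calc ∫⁻ ω, ENNReal.ofReal (F ω ^ p) ∂μ
      = ENNReal.ofReal p * ∫⁻ c in Ioi 0, μ {ω | c < F ω} * ENNReal.ofReal (c ^ (p - 1)) :=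
        lintegral_rpow_eq_lintegral_meas_lt_mul μ hF_nonneg hF (by linarith)
    _ ≤ ENNReal.ofReal p *
          ∫⁻ c in Ioi 0, ENNReal.ofReal (c ^ (p - 2)) * ∫⁻ s in Ioi c, μ {ω | s < f ω} := by
        gcongr 1
        refine setLIntegral_mono' measurableSet_Ioi fun c (hc : 0 < c) => ?_
        rw [← lintegral_ofReal_sub_eq_lintegral_meas_lt hf c]
        have h_rpow : c ^ (p - 1) = c ^ (p - 2) * c := by
          rw [← Real.rpow_add_one hc.ne']; ring_nf
        rw [h_rpow, ENNReal.ofReal_mul (by positivity), mul_comm, mul_assoc]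
        gcongr
        exact h c hc
    _ = ENNReal.ofReal p *
          ∫⁻ s in Ioi 0, μ {ω | s < f ω} * ∫⁻ c in Ioo 0 s, ENNReal.ofReal (c ^ (p - 2)) := by
        rw [lintegral_Ioi_mul_lintegral_Ioi (by fun_prop) hm]
    _ = ENNReal.ofReal p * ∫⁻ s in Ioi 0,
          ENNReal.ofReal (p - 1)⁻¹ * (μ {ω | s < f ω} * ENNReal.ofReal (s ^ (p - 1))) := by
        congr 1
        refine setLIntegral_congr_fun measurableSet_Ioi fun s (hs : 0 < s) => ?_
        have h_exp : p - 2 + 1 = p - 1 := by ring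
        simp only [lintegral_Ioo_ofReal_rpow (by linarith : -1 < p - 2) hs.le, h_exp,
          div_eq_inv_mul, ENNReal.ofReal_mul (inv_nonneg.2 (sub_nonneg.2 hp.le))]
        ring
    _ = ENNReal.ofReal (p - 1)⁻¹ * ∫⁻ ω, ENNReal.ofReal (f ω ^ p) ∂μ := by
        rw [lintegral_rpow_eq_lintegral_meas_lt_mul μ hf_nonneg hf (by linarith),
          lintegral_const_mul _ (hm.fun_mul (by fun_prop)), mul_left_comm]

theorem eLpNorm_le_of_mul_meas_lt_le {μ : Measure Ω} {f F : Ω → ℝ} (hf : AEMeasurable f μ)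
    (hF : AEMeasurable F μ) (hf_nonneg : 0 ≤ᵐ[μ] f) (hF_nonneg : 0 ≤ᵐ[μ] F)
    (h : ∀ c : ℝ, 0 < c →
      ENNReal.ofReal c * μ {ω | c < F ω} ≤ ∫⁻ ω, ENNReal.ofReal (f ω - c) ∂μ)
    {p : ℝ≥0∞} (hp : 1 < p) (hp_top : p ≠ ∞) :
    eLpNorm F p μ ≤ ENNReal.ofReal (p.toReal - 1)⁻¹ ^ (1 / p.toReal) * eLpNorm f p μ := by
  have hp_real : 1 < p.toReal := ENNReal.toReal_one ▸ ENNReal.toReal_strict_mono hp_top hp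
  have h_eq {g : Ω → ℝ} (hg : 0 ≤ᵐ[μ] g) :
      eLpNorm g p μ = (∫⁻ ω, ENNReal.ofReal (g ω ^ p.toReal) ∂μ) ^ (1 / p.toReal) := by
    rw [eLpNorm_eq_lintegral_rpow_enorm_toReal (zero_lt_one.trans hp).ne' hp_top]
    congr 1
    refine lintegral_congr_ae (hg.mono fun ω (hω : 0 ≤ g ω) => ?_)
    simp only [Real.enorm_of_nonneg hω, ENNReal.ofReal_rpow_of_nonneg hω toReal_nonneg]
  rw [h_eq hf_nonneg, h_eq hF_nonneg, ← ENNReal.mul_rpow_of_nonneg _ _ (by positivity)]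
  gcongr
  exact lintegral_rpow_le_of_mul_meas_lt_le hf hF hf_nonneg hF_nonneg h hp_real

end LayerCake

section MaximalBound

variable {μ : Measure Ω} {p : ℝ≥0∞}

theorem L1pLinf.exists_forall_le_of_monotone {V : ℕ → L1pLinf μ} (hV : Monotone V) (hp : 1 ≤ p)
    {K : ℝ≥0∞} (hK : K ≠ ∞) (h : ∀ n, eLpNorm (V n) p μ ≤ K) :
    ∃ G : L1pLinf μ, eLpNorm G p μ ≤ K ∧ ∀ n, V n ≤ G := by
  have h_mono : ∀ᵐ ω ∂μ, Monotone fun n => V n ω := by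
    filter_upwards [ae_all_iff.2 fun n => L1pLinf.coeFn_le.2 (hV (Nat.le_succ n))] with ω hω
      using monotone_nat_of_le_succ hω
  lift K to NNReal using hK
  have h_lim : ∀ᵐ ω ∂μ, ∃ a, Tendsto (fun n => V n ω) atTop (𝓝 a) := by
    filter_upwards [h_mono, ae_bdd_liminf_atTop_of_eLpNorm_bdd (zero_lt_one.trans_le hp).ne'
      (fun n => (V n).1.measurable) h] with ω h_mono h_bdd
    refine (tendsto_atTop_of_monotone h_mono).resolve_left fun h_top => h_bdd.ne ?_
    refine Tendsto.liminf_eq ?_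
    simp only [Real.enorm_eq_ofReal_abs]
    exact ENNReal.tendsto_ofReal_nhds_top.2 (tendsto_abs_atTop_atTop.comp h_top)
  obtain ⟨G, hG_meas, hG⟩ := measurable_limit_of_tendsto_metrizable_ae
    (fun n => (V n).1.aemeasurable) h_lim
  have hG_norm : eLpNorm G p μ ≤ K :=
    (Lp.eLpNorm_lim_le_liminf_eLpNorm (fun n => (V n).1.aestronglyMeasurable) G hG).trans
      (liminf_le_of_frequently_le' (.of_forall h))
  obtain ⟨G', hG'⟩ := L1pLinf.exists_ae_eq_of_memLp hp
    ⟨hG_meas.aestronglyMeasurable, hG_norm.trans_lt ENNReal.coe_lt_top⟩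
  refine ⟨G', (eLpNorm_congr_ae hG').trans_le hG_norm, fun n => L1pLinf.coeFn_le.1 ?_⟩
  filter_upwards [h_mono, hG, hG'] with ω h₁ h₂ h₃
  exact h₃ ▸ h₁.ge_of_tendsto h₂ n

/-- The strong type `(p, p)` maximal inequality for a family of operators. Since suprema of
uncountable families of a.e. classes are problematic, the maximal function is replaced by a
majorant `G`. -/
def HasMaximalBound {ι : Type*} (p : ℝ≥0∞) (A : ι → Module.End ℝ (L1pLinf μ)) : Prop :=
  ∃ C : NNReal, ∀ f : L1pLinf μ, eLpNorm f p μ ≠ ∞ →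
    ∃ G : L1pLinf μ, eLpNorm G p μ ≤ C * eLpNorm f p μ ∧ ∀ i, |A i f| ≤ G

theorem IsDunfordSchwartz.eLpNorm_partialSups_cesaroAverage_le {T : Module.End ℝ (L1pLinf μ)}
    (hT : IsDunfordSchwartz T) (hp : 1 < p) (hp_top : p ≠ ∞) {f : L1pLinf μ} (hf : 0 ≤ f) (n : ℕ) :
    eLpNorm (partialSups (fun k => cesaroAverage T k f) n) p μ ≤
      2 * ENNReal.ofReal (p.toReal - 1)⁻¹ ^ (1 / p.toReal) * eLpNorm f p μ := by
  set V := partialSups (fun k => cesaroAverage T k f) n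
  have hV : 0 ≤ V := by
    rw [← map_zero (cesaroAverage T 0)]
    exact ((hT.cesaroAverage 0).monotone hf).trans
      (le_partialSups_of_le (fun k => cesaroAverage T k f) n.zero_le)
  have hV_half : eLpNorm (fun ω => V ω / 2) p μ ≤
      ENNReal.ofReal (p.toReal - 1)⁻¹ ^ (1 / p.toReal) * eLpNorm f p μ := by
    refine eLpNorm_le_of_mul_meas_lt_le f.1.aemeasurable (V.1.aemeasurable.div_const 2)
      (L1pLinf.coeFn_nonneg.2 hf) ?_ (fun c hc => ?_) hp hp_top
    · filter_upwards [L1pLinf.coeFn_nonneg.2 hV] with ω hω using div_nonneg hω zero_le_two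
    · simp only [lt_div_iff₀' (zero_lt_two' ℝ)]
      exact hT.mul_measure_two_mul_lt_partialSups_le hc n
  have hV_eq : ⇑V = (2 : ℝ) • fun ω => V ω / 2 := by
    ext ω; exact (mul_div_cancel₀ _ two_ne_zero).symm
  rw [hV_eq, eLpNorm_const_smul, mul_assoc]
  gcongr
  rw [Real.enorm_of_nonneg zero_le_two, ENNReal.ofReal_ofNat]

theorem IsDunfordSchwartz.hasMaximalBound_cesaroAverage {T : Module.End ℝ (L1pLinf μ)}
    (hT : IsDunfordSchwartz T) (hp : 1 < p) (hp_top : p ≠ ∞) :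
    HasMaximalBound p (cesaroAverage T) := by
  have hC : 2 * ENNReal.ofReal (p.toReal - 1)⁻¹ ^ (1 / p.toReal) ≠ ∞ :=
    ENNReal.mul_ne_top ENNReal.ofNat_ne_top
      (ENNReal.rpow_ne_top_of_nonneg (by positivity) ENNReal.ofReal_ne_top)
  lift 2 * ENNReal.ofReal (p.toReal - 1)⁻¹ ^ (1 / p.toReal) to NNReal using hC with C h_eq
  refine ⟨C, fun f hf => ?_⟩
  obtain ⟨G, hG_norm, hG⟩ := L1pLinf.exists_forall_le_of_monotone
    (partialSups (fun k => cesaroAverage T k |f|)).monotone hp.le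
    (ENNReal.mul_ne_top ENNReal.coe_ne_top hf) fun n => by
      rw [h_eq]
      refine (hT.eLpNorm_partialSups_cesaroAverage_le hp hp_top (abs_nonneg f) n).trans ?_
      gcongr
      exact (L1pLinf.eLpNorm_abs f p).le
  exact ⟨G, hG_norm, fun n => (abs_map_le_map_abs (hT.cesaroAverage n).monotone f).trans
    ((le_partialSups (fun k => cesaroAverage T k |f|) n).trans (hG n))⟩

theorem HasMaximalBound.mul {ι κ : Type*} {A : ι → Module.End ℝ (L1pLinf μ)}
    {B : κ → Module.End ℝ (L1pLinf μ)} (hA : HasMaximalBound p A) (hA_mono : ∀ i, Monotone (A i))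
    (hB : HasMaximalBound p B) : HasMaximalBound p fun i : ι × κ => A i.1 * B i.2 := by
  obtain ⟨C, hC⟩ := hA
  obtain ⟨D, hD⟩ := hB
  refine ⟨C * D, fun f hf => ?_⟩
  obtain ⟨G, hG_norm, hG⟩ := hD f hf
  obtain ⟨H, hH_norm, hH⟩ :=
    hC G (ne_top_of_le_ne_top (ENNReal.mul_ne_top ENNReal.coe_ne_top hf) hG_norm)
  refine ⟨H, ?_, fun ⟨i, j⟩ => ?_⟩
  · calc eLpNorm H p μ ≤ C * eLpNorm G p μ := hH_norm
      _ ≤ C * (D * eLpNorm f p μ) := by gcongr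
      _ = ↑(C * D) * eLpNorm f p μ := by rw [ENNReal.coe_mul, mul_assoc]
  · calc |A i (B j f)| ≤ A i |B j f| := abs_map_le_map_abs (hA_mono i) _
      _ ≤ A i G := hA_mono i (hG j)
      _ ≤ H := (le_abs_self _).trans (hH i)

end MaximalBound

section MultiAverage

/-- The product `A_{n₁}(T₁) ⋯ A_{n_d}(T_d)` of Cesàro averages; see `coe_multiAverage_apply` for the
agreement with `multiAvg`. -/
noncomputable def multiAverage {E : Type*} [AddCommGroup E] [Module ℝ E] {d : ℕ}
    (T : Fin d → Module.End ℝ E) (n : Fin d → ℕ) : Module.End ℝ E :=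
  (List.ofFn fun i => cesaroAverage (T i) (n i)).prod

theorem multiAverage_succ {E : Type*} [AddCommGroup E] [Module ℝ E] {d : ℕ}
    (T : Fin (d + 1) → Module.End ℝ E) (n : Fin (d + 1) → ℕ) :
    multiAverage T n =
      cesaroAverage (T 0) (n 0) * multiAverage (Fin.tail T) (Fin.tail n) := by
  rw [multiAverage, List.ofFn_succ, List.prod_cons]
  rfl

theorem multiAverage_eq {E : Type*} [AddCommGroup E] [Module ℝ E] {d : ℕ}
    (T : Fin d → Module.End ℝ E) (n : Fin d → ℕ) :
    multiAverage T n = (∏ i, (n i : ℝ))⁻¹ • ∑ k ∈ Fintype.piFinset fun i => Finset.range (n i),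
      (List.ofFn fun i => T i ^ k i).prod := by
  simp only [multiAverage, cesaroAverage, ← MultilinearMap.mkPiAlgebraFin_apply (R := ℝ),
    MultilinearMap.map_smul_univ, MultilinearMap.map_sum_finset, Finset.prod_inv_distrib]

variable {μ : Measure Ω} {d : ℕ} {S : Fin d → Module.End ℝ (L1pLinf μ)}
  {T : Fin d → (Ω →ₘ[μ] ℝ) → (Ω →ₘ[μ] ℝ)}

theorem coe_prod_pow_apply (hST : ∀ i (f : L1pLinf μ), (S i f : Ω →ₘ[μ] ℝ) = T i f)
    (k : Fin d → ℕ) (f : L1pLinf μ) :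
    ((List.ofFn fun i => S i ^ k i).prod f : Ω →ₘ[μ] ℝ) = iterComp T k f := by
  induction d with
  | zero => rfl
  | succ d ih =>
    have h_pow (g : L1pLinf μ) : ((S 0 ^ k 0) g : Ω →ₘ[μ] ℝ) = (T 0)^[k 0] g := by
      rw [Module.End.pow_apply]
      exact Function.Semiconj.iterate_right (hST 0) (k 0) g
    rw [iterComp, List.ofFn_succ, List.ofFn_succ, List.prod_cons, List.foldr_cons,
      Module.End.mul_apply, h_pow, Function.comp_apply]
    exact congrArg _ (ih (S := Fin.tail S) (fun i => hST i.succ) _)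

theorem coe_multiAverage_apply (hST : ∀ i (f : L1pLinf μ), (S i f : Ω →ₘ[μ] ℝ) = T i f)
    (n : Fin d → ℕ) (f : L1pLinf μ) : (multiAverage S n f : Ω →ₘ[μ] ℝ) = multiAvg μ T n f := by
  rw [multiAverage_eq, LinearMap.smul_apply, LinearMap.sum_apply, Submodule.coe_smul,
    Submodule.coe_sum, multiAvg]
  simp only [coe_prod_pow_apply hST]

theorem hasMaximalBound_multiAverage {p : ℝ≥0∞} (hp : 1 < p) (hp_top : p ≠ ∞)
    (hS : ∀ i, IsDunfordSchwartz (S i)) : HasMaximalBound p (multiAverage S) := by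
  induction d with
  | zero => exact ⟨1, fun f _ => ⟨|f|, by
      rw [ENNReal.coe_one, one_mul]
      exact (L1pLinf.eLpNorm_abs f p).le, fun _ => le_rfl⟩⟩
  | succ d ih =>
    obtain ⟨C, hC⟩ := ((hS 0).hasMaximalBound_cesaroAverage hp hp_top).mul
      (fun n => ((hS 0).cesaroAverage n).monotone) (ih fun i => hS i.succ)
    refine ⟨C, fun f hf => (hC f hf).imp fun G hG => ⟨hG.1, fun n => ?_⟩⟩
    rw [multiAverage_succ]
    exact hG.2 (n 0, Fin.tail n)

end MultiAverage

section MeanErgodic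

theorem exists_map_eq_and_sub_mem_closure_range {H : Type*} [NormedAddCommGroup H]
    [InnerProductSpace ℝ H] [CompleteSpace H] {L : H →L[ℝ] H} (hL : ‖L‖ ≤ 1) (f : H) :
    ∃ h, L h = h ∧ f - h ∈ closure (range fun g => g - L g) := by
  let K := (LinearMap.range (1 - L : H →L[ℝ] H).toLinearMap).topologicalClosure
  have : CompleteSpace K := (Submodule.isClosed_topologicalClosure _).completeSpace_coe
  obtain ⟨k, hk, h, hh, rfl⟩ := K.exists_add_mem_mem_orthogonal f
  refine ⟨h, ?_, by rw [add_sub_cancel_right]; exact hk⟩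
  have h_inner (g : H) : inner ℝ (L g) h = inner ℝ g h := by
    have h_orth : inner ℝ (g - L g) h = 0 :=
      (Submodule.mem_orthogonal K h).1 hh _ (Submodule.le_topologicalClosure _ ⟨g, rfl⟩)
    rw [inner_sub_left, sub_eq_zero] at h_orth
    exact h_orth.symm
  refine eq_of_norm_le_re_inner_eq_norm_sq (𝕜 := ℝ) ?_ ?_
  · exact (L.le_of_opNorm_le hL h).trans_eq (one_mul _)
  · rw [h_inner, inner_self_eq_norm_sq]

variable {μ : Measure Ω} {T : Module.End ℝ (L1pLinf μ)}

theorem exists_continuousLinearMap_Lp {p : ℝ≥0∞} [Fact (1 ≤ p)]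
    (hT : ∀ f, eLpNorm (T f) p μ ≤ eLpNorm f p μ) :
    ∃ L : Lp ℝ p μ →L[ℝ] Lp ℝ p μ, ‖L‖ ≤ 1 ∧
      ∀ (f : L1pLinf μ) (h : Lp ℝ p μ), (f : Ω →ₘ[μ] ℝ) = h → (T f : Ω →ₘ[μ] ℝ) = L h := by
  let e (h : Lp ℝ p μ) : L1pLinf μ := ⟨h, mem_L1pLinf_of_eLpNorm_ne_top Fact.out h.2.ne⟩
  let L : Lp ℝ p μ →ₗ[ℝ] Lp ℝ p μ :=
    { toFun := fun h => ⟨T (e h), (hT _).trans_lt h.2⟩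
      map_add' := fun g h => Subtype.ext
        (congrArg (fun f : L1pLinf μ => (f : Ω →ₘ[μ] ℝ)) (map_add T (e g) (e h)))
      map_smul' := fun c h => Subtype.ext
        (congrArg (fun f : L1pLinf μ => (f : Ω →ₘ[μ] ℝ)) (map_smul T c (e h))) }
  refine ⟨L.mkContinuous 1 fun h => ?_, L.mkContinuous_norm_le zero_le_one _, fun f h hfh => ?_⟩
  · rw [one_mul, Lp.norm_def, Lp.norm_def]
    exact ENNReal.toReal_mono h.2.ne (hT (e h))
  · obtain rfl : f = e h := Subtype.ext hfh
    rfl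

namespace IsDunfordSchwartz

theorem sq_map_le (hT : IsDunfordSchwartz T) {f s : L1pLinf μ} (h : ∀ᵐ ω ∂μ, f ω ^ 2 ≤ s ω) :
    ∀ᵐ ω ∂μ, T f ω ^ 2 ≤ T s ω := by
  have h_tangent (c : ℝ) : ∀ᵐ ω ∂μ, 2 * c * T f ω ≤ T s ω + c ^ 2 := by
    have h_le : (2 * c) • f ≤ s + c ^ 2 • 1 := by
      rw [← L1pLinf.coeFn_le]
      filter_upwards [h, L1pLinf.coeFn_smul (2 * c) f, L1pLinf.coeFn_add_smul_one s (c ^ 2)]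
        with ω hω h₁ h₂
      rw [h₁, h₂, Pi.smul_apply, smul_eq_mul]
      linarith [two_mul_le_add_sq c (f ω)]
    have hT_le := hT.map_le_add_smul_one (sq_nonneg c) h_le
    rw [map_smul, ← L1pLinf.coeFn_le] at hT_le
    filter_upwards [hT_le, L1pLinf.coeFn_smul (2 * c) (T f),
      L1pLinf.coeFn_add_smul_one (T s) (c ^ 2)] with ω hω h₁ h₂
    rwa [h₁, h₂, Pi.smul_apply, smul_eq_mul] at hω
  filter_upwards [ae_all_iff.2 fun c : ℚ => h_tangent c] with ω hω
  have h_real : 2 * T f ω * T f ω ≤ T s ω + T f ω ^ 2 :=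
    Rat.denseRange_cast.induction_on (p := fun c : ℝ => 2 * c * T f ω ≤ T s ω + c ^ 2) (T f ω)
      (isClosed_le (by fun_prop) (by fun_prop)) hω
  linarith

theorem eLpNorm_two_le (hT : IsDunfordSchwartz T) (f : L1pLinf μ) :
    eLpNorm (T f) 2 μ ≤ eLpNorm f 2 μ := by
  obtain hf | hf := eq_or_ne (eLpNorm f 2 μ) ∞
  · exact hf ▸ le_top
  have hf_sq : Integrable (fun ω => f ω ^ 2) μ :=
    MemLp.integrable_sq ⟨f.1.aestronglyMeasurable, hf.lt_top⟩
  obtain ⟨s, hs⟩ := L1pLinf.exists_ae_eq_of_memLp le_rfl (memLp_one_iff_integrable.2 hf_sq)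
  have h_two (g : Ω → ℝ) : eLpNorm g 2 μ ^ (2 : ℝ) = eLpNorm (fun ω => g ω ^ 2) 1 μ := by
    have h := eLpNorm_norm_rpow (p := 1) (μ := μ) g zero_lt_two
    simp only [one_mul, ENNReal.ofReal_ofNat, Real.rpow_two, Real.norm_eq_abs, sq_abs] at h
    exact h.symm
  rw [← ENNReal.rpow_le_rpow_iff zero_lt_two, h_two, h_two]
  calc eLpNorm (fun ω => T f ω ^ 2) 1 μ ≤ eLpNorm (T s) 1 μ := by
        refine eLpNorm_mono_ae_real ?_
        filter_upwards [hT.sq_map_le (hs.mono fun ω hω => hω.ge)] with ω hω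
        rwa [Real.norm_of_nonneg (sq_nonneg _)]
    _ ≤ eLpNorm s 1 μ := hT.eLpNorm_one_le s
    _ = eLpNorm (fun ω => f ω ^ 2) 1 μ := eLpNorm_congr_ae hs

theorem exists_fixed_forall_exists_coboundary (hT : IsDunfordSchwartz T) {f : L1pLinf μ}
    (hf : eLpNorm f 2 μ ≠ ∞) :
    ∃ h, T h = h ∧ eLpNorm h 2 μ ≠ ∞ ∧ ∀ ε : ℝ≥0∞, ε ≠ 0 → ∃ g : L1pLinf μ,
      eLpNorm g ⊤ μ ≠ ∞ ∧ eLpNorm ⇑(f - h - (g - T g)) 2 μ ≤ ε := by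
  obtain ⟨L, hL_norm, hL⟩ := exists_continuousLinearMap_Lp (p := 2) hT.eLpNorm_two_le
  let e (h : Lp ℝ 2 μ) : L1pLinf μ := ⟨h, mem_L1pLinf_of_eLpNorm_ne_top one_le_two h.2.ne⟩
  obtain ⟨f, rfl⟩ : ∃ f' : Lp ℝ 2 μ, e f' = f := ⟨⟨f, hf.lt_top⟩, rfl⟩
  obtain ⟨h, hLh, h_closure⟩ := exists_map_eq_and_sub_mem_closure_range hL_norm f
  have h_dense : Dense (Lp.simpleFunc ℝ 2 μ : Set (Lp ℝ 2 μ)) :=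
    Lp.simpleFunc.dense ENNReal.ofNat_ne_top
  have h_closure_simple := closure_minimal
    (Continuous.range_subset_closure_image_dense (f := fun g => g - L g) (by fun_prop) h_dense)
    isClosed_closure h_closure
  refine ⟨e h, Subtype.ext ((hL _ h rfl).trans (congrArg _ hLh)), h.2.ne, fun ε hε => ?_⟩
  obtain ⟨_, ⟨g, ⟨s, hs⟩, rfl⟩, hg⟩ := EMetric.mem_closure_iff.1 h_closure_simple ε hε.bot_lt
  refine ⟨e g, ?_, ?_⟩
  · have hgs : (g : Ω →ₘ[μ] ℝ) =ᵐ[μ] s := hs ▸ AEEqFun.coeFn_mk _ _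
    exact (eLpNorm_congr_ae hgs).trans_ne (s.memLp_top μ).2.ne
  · have h_coe : (↑(e f - e h - (e g - T (e g))) : Ω →ₘ[μ] ℝ) = ↑(f - h - (g - L g)) := by
      rw [Submodule.coe_sub, Submodule.coe_sub, Submodule.coe_sub, hL _ g rfl]
      rfl
    rw [h_coe, ← Lp.enorm_def, ← edist_eq_enorm_sub]
    exact hg.le

end IsDunfordSchwartz

end MeanErgodic

section MaximalTendsto

theorem cesaroAverage_of_map_eq {E : Type*} [AddCommGroup E] [Module ℝ E] {T : Module.End ℝ E}
    {h : E} (hh : T h = h) {n : ℕ} (hn : n ≠ 0) : cesaroAverage T n h = h := by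
  have h_pow (k : ℕ) : (T ^ k) h = h := by
    rw [Module.End.pow_apply, Function.iterate_fixed hh]
  simp only [cesaroAverage_apply, h_pow, Finset.sum_const, Finset.card_range]
  rw [← Nat.cast_smul_eq_nsmul ℝ, inv_smul_smul₀ (Nat.cast_ne_zero.2 hn)]

theorem cesaroAverage_sub_map {E : Type*} [AddCommGroup E] [Module ℝ E] (T : Module.End ℝ E)
    (g : E) (n : ℕ) : cesaroAverage T n (g - T g) = (n : ℝ)⁻¹ • (g - (T ^ n) g) := by
  have h_mul : cesaroAverage T n * (1 - T) = (n : ℝ)⁻¹ • (1 - T ^ n) := by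
    rw [cesaroAverage, smul_mul_assoc, geom_sum_mul_neg]
  exact LinearMap.congr_fun h_mul g

variable {μ : Measure Ω} {ι : Type*} {p : ℝ≥0∞}

theorem IsDunfordSchwartz.eventually_abs_cesaroAverage_sub_map_le {T : Module.End ℝ (L1pLinf μ)}
    (hT : IsDunfordSchwartz T) {g : L1pLinf μ} (hg : eLpNorm g ⊤ μ ≠ ∞) {ε : ℝ} (hε : 0 < ε) :
    ∀ᶠ n in atTop, |cesaroAverage T n (g - T g)| ≤ ε • 1 := by
  have h_norm (n : ℕ) : eLpNorm (cesaroAverage T n (g - T g)) ⊤ μ ≤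
      ENNReal.ofReal (n : ℝ)⁻¹ * (2 * eLpNorm g ⊤ μ) := by
    rw [cesaroAverage_sub_map, L1pLinf.eLpNorm_smul, Real.enorm_of_nonneg (by positivity), two_mul,
      eLpNorm_congr_ae (L1pLinf.coeFn_sub _ _)]
    gcongr
    refine (eLpNorm_sub_le g.1.aestronglyMeasurable ((T ^ n) g).1.aestronglyMeasurable le_top).trans
      ?_
    gcongr
    exact (hT.pow n).eLpNorm_top_le g
  have h_lim : Tendsto (fun n : ℕ => ENNReal.ofReal (n : ℝ)⁻¹ * (2 * eLpNorm g ⊤ μ)) atTop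
      (𝓝 0) := by
    rw [← zero_mul (2 * eLpNorm g ⊤ μ), ← ENNReal.ofReal_zero]
    exact ENNReal.Tendsto.mul_const (ENNReal.tendsto_ofReal tendsto_inv_atTop_nhds_zero_nat)
      (.inr (ENNReal.mul_ne_top ENNReal.ofNat_ne_top hg))
  filter_upwards [h_lim.eventually_le_const (ENNReal.ofReal_pos.2 hε)] with n hn
  exact (L1pLinf.abs_le_smul_one_iff hε.le).2 ((h_norm n).trans hn)

theorem HasMaximalBound.exists_majorant_le {A : ι → Module.End ℝ (L1pLinf μ)}
    (hA : HasMaximalBound p A) {ε : ℝ≥0∞} (hε : ε ≠ 0) :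
    ∃ δ : NNReal, 0 < δ ∧ ∀ f : L1pLinf μ, eLpNorm f p μ ≤ δ →
      ∃ G : L1pLinf μ, eLpNorm G p μ ≤ ε ∧ ∀ i, |A i f| ≤ G := by
  obtain ⟨C, hC⟩ := hA
  obtain ⟨δ, hδ, hδC⟩ := ENNReal.exists_nnreal_pos_mul_lt (ENNReal.coe_ne_top (r := C)) hε
  refine ⟨δ, hδ, fun f hf => ?_⟩
  obtain ⟨G, hG, hAG⟩ := hC f (ne_top_of_le_ne_top ENNReal.coe_ne_top hf)
  refine ⟨G, hG.trans ?_, hAG⟩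
  rw [mul_comm]
  exact le_trans (by gcongr) hδC.le

/-- Convergence of `F` to `F₀` along `l` with the tails dominated, up to an error that is small in
`L^∞`, by a single function that is small in `L^p`. Unlike almost uniform convergence, this passes
through a family of positive operators satisfying a maximal inequality. -/
def MaximalTendsto (p : ℝ≥0∞) (l : Filter ι) (F : ι → L1pLinf μ) (F₀ : L1pLinf μ) : Prop :=
  ∀ ε : NNReal, 0 < ε → ∃ R : L1pLinf μ, eLpNorm R p μ ≤ ε ∧
    ∀ᶠ i in l, |F i - F₀| ≤ R + (ε : ℝ) • 1

theorem maximalTendsto_const (l : Filter ι) (F₀ : L1pLinf μ) :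
    MaximalTendsto p l (fun _ => F₀) F₀ := fun ε _ => by
  refine ⟨0, ?_, .of_forall fun _ => ?_⟩
  · rw [eLpNorm_congr_ae L1pLinf.coeFn_zero, eLpNorm_zero]
    exact zero_le
  · rw [sub_self, abs_zero, zero_add]
    exact smul_nonneg ε.coe_nonneg zero_le_one

theorem IsDunfordSchwartz.exists_maximalTendsto_cesaroAverage {T : Module.End ℝ (L1pLinf μ)}
    (hT : IsDunfordSchwartz T) {f : L1pLinf μ} (hf : eLpNorm f 2 μ ≠ ∞) :
    ∃ F₀ : L1pLinf μ, eLpNorm F₀ 2 μ ≠ ∞ ∧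
      MaximalTendsto 2 atTop (fun n => cesaroAverage T n f) F₀ := by
  obtain ⟨h, hTh, hh, h_approx⟩ := hT.exists_fixed_forall_exists_coboundary hf
  refine ⟨h, hh, fun ε hε => ?_⟩
  obtain ⟨δ, hδ, h_max⟩ :=
    (hT.hasMaximalBound_cesaroAverage one_lt_two ENNReal.ofNat_ne_top).exists_majorant_le
      (ENNReal.coe_ne_zero.2 hε.ne')
  obtain ⟨g, hg, hr⟩ := h_approx δ (ENNReal.coe_ne_zero.2 hδ.ne')
  obtain ⟨G, hG_norm, hG⟩ := h_max _ hr
  refine ⟨G, hG_norm, ?_⟩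
  filter_upwards [eventually_ne_atTop 0, hT.eventually_abs_cesaroAverage_sub_map_le hg hε]
    with n hn hgn
  have h_split : cesaroAverage T n f - h =
      cesaroAverage T n (f - h - (g - T g)) + cesaroAverage T n (g - T g) := by
    rw [map_sub, map_sub, cesaroAverage_of_map_eq hTh hn, sub_add_cancel]
  rw [h_split]
  exact (abs_add_le _ _).trans (add_le_add (hG n) hgn)

theorem MaximalTendsto.comp {κ : Type*} {l : Filter ι} {l' : Filter κ} (hp : 1 ≤ p)
    {A : κ → Module.End ℝ (L1pLinf μ)} (hA_ds : ∀ k, IsDunfordSchwartz (A k))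
    (hA : HasMaximalBound p A) {F : ι → L1pLinf μ} {F₀ F₁ : L1pLinf μ}
    (hF : MaximalTendsto p l F F₀) (hF₀ : MaximalTendsto p l' (fun k => A k F₀) F₁) :
    MaximalTendsto p (l' ×ˢ l) (fun i => A i.1 (F i.2)) F₁ := fun ε hε => by
  have hε₂ : 0 < ε / 2 := half_pos hε
  obtain ⟨δ, hδ, h_max⟩ := hA.exists_majorant_le (ENNReal.coe_ne_zero.2 hε₂.ne')
  obtain ⟨R, hR_norm, hR⟩ := hF (min δ (ε / 2)) (lt_min hδ hε₂)
  obtain ⟨G, hG_norm, hG⟩ := h_max R (hR_norm.trans (ENNReal.coe_le_coe.2 (min_le_left _ _)))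
  obtain ⟨R', hR'_norm, hR'⟩ := hF₀ (ε / 2) hε₂
  refine ⟨G + R', ?_, ?_⟩
  · calc eLpNorm ⇑(G + R') p μ ≤ eLpNorm G p μ + eLpNorm R' p μ := L1pLinf.eLpNorm_add_le G R' hp
      _ ≤ ↑(ε / 2) + ↑(ε / 2) := by gcongr
      _ = ε := by rw [← ENNReal.coe_add, add_halves]
  · filter_upwards [hR'.prod_mk hR] with ⟨k, i⟩ ⟨hk, hi⟩
    have h_map : |A k (F i - F₀)| ≤ G + (↑(ε / 2) : ℝ) • 1 :=
      calc |A k (F i - F₀)| ≤ A k |F i - F₀| := abs_map_le_map_abs (hA_ds k).monotone _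
        _ ≤ A k R + (↑(min δ (ε / 2)) : ℝ) • 1 :=
          (hA_ds k).map_le_add_smul_one (NNReal.coe_nonneg _) hi
        _ ≤ G + (↑(ε / 2) : ℝ) • 1 :=
          add_le_add ((le_abs_self _).trans (hG k))
            (smul_le_smul_of_nonneg_right (NNReal.coe_le_coe.2 (min_le_right _ _)) zero_le_one)
    calc |A k (F i) - F₁| = |A k (F i - F₀) + (A k F₀ - F₁)| := by
          rw [map_sub, sub_add_sub_cancel]
      _ ≤ |A k (F i - F₀)| + |A k F₀ - F₁| := abs_add_le _ _
      _ ≤ (G + (↑(ε / 2) : ℝ) • 1) + (R' + (↑(ε / 2) : ℝ) • 1) := add_le_add h_map hk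
      _ = G + R' + (ε : ℝ) • 1 := by
          rw [add_add_add_comm, ← add_smul, ← NNReal.coe_add, add_halves]

theorem exists_maximalTendsto_multiAverage {d : ℕ} {S : Fin d → Module.End ℝ (L1pLinf μ)}
    (hS : ∀ i, IsDunfordSchwartz (S i)) {f : L1pLinf μ} (hf : eLpNorm f 2 μ ≠ ∞) :
    ∃ F₀ : L1pLinf μ, eLpNorm F₀ 2 μ ≠ ∞ ∧
      MaximalTendsto 2 atTop (fun n => multiAverage S n f) F₀ := by
  induction d with
  | zero => exact ⟨f, hf, maximalTendsto_const atTop f⟩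
  | succ d ih =>
    obtain ⟨F₀, hF₀, hF⟩ := ih fun i => hS i.succ
    obtain ⟨F₁, hF₁, hF'⟩ := (hS 0).exists_maximalTendsto_cesaroAverage hF₀
    refine ⟨F₁, hF₁, fun ε hε => ?_⟩
    obtain ⟨R, hR_norm, hR⟩ := hF.comp one_le_two (fun n => (hS 0).cesaroAverage n)
      ((hS 0).hasMaximalBound_cesaroAverage one_lt_two ENNReal.ofNat_ne_top) hF' ε hε
    refine ⟨R, hR_norm, ?_⟩
    have h_split : Tendsto (fun n : Fin (d + 1) → ℕ => (n 0, Fin.tail n)) atTop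
        (atTop ×ˢ atTop) := by
      rw [prod_atTop_atTop_eq]
      exact tendsto_atTop_atTop_of_monotone (fun _ _ h => ⟨h 0, fun i => h i.succ⟩)
        fun m => ⟨Fin.cons m.1 m.2, le_rfl, fun _ => le_rfl⟩
    filter_upwards [h_split.eventually hR] with n hn
    rwa [multiAverage_succ]

end MaximalTendsto

section AlmostUniform

variable {μ : Measure Ω}

theorem exists_ae_tendsto_of_forall_abs_sub_le {G : ℕ → Ω →ₘ[μ] ℝ} {E : ℕ → Set Ω} {ε : ℕ → NNReal}
    (hε : Tendsto ε atTop (𝓝 0)) (hE : ∑' k, μ (E k)ᶜ ≠ ∞)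
    (hG : ∀ k m, ∀ᵐ ω ∂μ, ω ∈ E k → ω ∈ E m → |G k ω - G m ω| ≤ ε k + ε m) :
    ∃ g : Ω →ₘ[μ] ℝ, ∀ᵐ ω ∂μ, Tendsto (fun k => G k ω) atTop (𝓝 (g ω)) := by
  have h_lim : ∀ᵐ ω ∂μ, ∃ a, Tendsto (fun k => G k ω) atTop (𝓝 a) := by
    filter_upwards [ae_eventually_notMem hE, ae_all_iff.2 fun k => ae_all_iff.2 (hG k)]
      with ω hωE hωG
    refine cauchySeq_tendsto_of_complete (cauchySeq_iff_tendsto_dist_atTop_0.2 ?_)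
    have hε_add : Tendsto (fun n : ℕ × ℕ => (ε n.1 + ε n.2 : ℝ)) (atTop ×ˢ atTop) (𝓝 0) := by
      have h := NNReal.tendsto_coe.2 hε
      simpa using (h.comp tendsto_fst).add (h.comp tendsto_snd)
    rw [← prod_atTop_atTop_eq]
    refine squeeze_zero' (.of_forall fun _ => dist_nonneg) ?_ hε_add
    filter_upwards [hωE.prod_mk hωE] with n hn
    exact hωG n.1 n.2 (notMem_compl_iff.1 hn.1) (notMem_compl_iff.1 hn.2)
  obtain ⟨g, hg_meas, hg⟩ := exists_stronglyMeasurable_limit_of_tendsto_ae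
    (fun k => (G k).aestronglyMeasurable) h_lim
  refine ⟨AEEqFun.mk g hg_meas.aestronglyMeasurable, ?_⟩
  filter_upwards [hg, AEEqFun.coeFn_mk g hg_meas.aestronglyMeasurable] with ω h₁ h₂
  rwa [h₂]

variable {ι : Type*} {l : Filter ι} {F : ι → Ω →ₘ[μ] ℝ}

theorem auTendsto_of_ae_tendsto {g : Ω →ₘ[μ] ℝ} {G : ℕ → Ω →ₘ[μ] ℝ} {E : ℕ → Set Ω}
    {ε : ℕ → NNReal} (hε : Tendsto ε atTop (𝓝 0)) (hE_meas : ∀ k, MeasurableSet (E k))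
    (hE : ∑' k, μ (E k)ᶜ ≠ ∞)
    (hG : ∀ k m, ∀ᵐ ω ∂μ, ω ∈ E k → ω ∈ E m → |G k ω - G m ω| ≤ ε k + ε m)
    (hF : ∀ k, ∀ᶠ i in l, ∀ᵐ ω ∂μ, ω ∈ E k → |F i ω - G k ω| ≤ ε k)
    (hg : ∀ᵐ ω ∂μ, Tendsto (fun k => G k ω) atTop (𝓝 (g ω))) : AuTendsto μ l F g := by
  intro δ hδ
  obtain ⟨j, hj⟩ := ((ENNReal.tendsto_sum_nat_add _ hE).eventually_le_const
    (ENNReal.ofReal_pos.2 hδ)).exists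
  refine ⟨⋂ k, E (k + j), .iInter fun k => hE_meas _, ?_,
    ENNReal.tendsto_nhds_zero.2 fun η hη => ?_⟩
  · rw [compl_iInter]
    exact (measure_iUnion_le _).trans hj
  have h_two : Tendsto (fun k => ((2 * ε k : NNReal) : ℝ≥0∞)) atTop (𝓝 0) := by
    simpa using ENNReal.tendsto_coe.2 (hε.const_mul 2)
  obtain ⟨k, hk, hjk⟩ := ((h_two.eventually_le_const hη).and (eventually_ge_atTop j)).exists
  filter_upwards [hF k] with i hi
  rw [eLpNorm_exponent_top]
  refine (eLpNormEssSup_le_of_ae_nnnorm_bound ?_).trans hk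
  filter_upwards [hi, hg, ae_all_iff.2 (hG k), AEEqFun.coeFn_sub (F i) g] with ω hFω hgω hGω h_sub
  by_cases hω : ω ∈ ⋂ k, E (k + j)
  swap
  · rw [indicator_of_notMem hω, nnnorm_zero]
    exact zero_le
  have hωE (m : ℕ) (hm : j ≤ m) : ω ∈ E m := by
    simpa only [Nat.sub_add_cancel hm] using mem_iInter.1 hω (m - j)
  have hGg : |G k ω - g ω| ≤ ε k := by
    refine le_of_tendsto_of_tendsto (tendsto_const_nhds.sub hgω).abs
      (b := atTop) (g := fun m => (ε k + ε m : ℝ)) ?_ ?_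
    · simpa using (NNReal.tendsto_coe.2 hε).const_add (ε k : ℝ)
    · filter_upwards [eventually_ge_atTop j] with m hm using hGω m (hωE k hjk) (hωE m hm)
  rw [indicator_of_mem hω, h_sub, Pi.sub_apply, ← NNReal.coe_le_coe, coe_nnnorm, Real.norm_eq_abs,
    two_mul, NNReal.coe_add]
  exact (abs_sub_le _ _ _).trans (add_le_add (hFω (hωE k hjk)) hGg)

theorem exists_auTendsto_of_forall_eventually_abs_sub_le [l.NeBot]
    (h : ∀ ε : NNReal, 0 < ε → ∃ (G : Ω →ₘ[μ] ℝ) (E : Set Ω), MeasurableSet E ∧ μ Eᶜ ≤ ε ∧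
      ∀ᶠ i in l, ∀ᵐ ω ∂μ, ω ∈ E → |F i ω - G ω| ≤ ε) :
    ∃ g : Ω →ₘ[μ] ℝ, AuTendsto μ l F g := by
  obtain ⟨ε, hε_pos, hε_sum⟩ := ENNReal.exists_pos_sum_of_countable one_ne_zero ℕ
  have hε : Tendsto ε atTop (𝓝 0) := NNReal.tendsto_atTop_zero_of_summable
    (ENNReal.tsum_coe_ne_top_iff_summable.1 hε_sum.ne_top)
  choose G E hE_meas hE hF using fun k => h (ε k) (hε_pos k)
  have hE_sum : ∑' k, μ (E k)ᶜ ≠ ∞ := ne_top_of_le_ne_top hε_sum.ne_top (ENNReal.tsum_le_tsum hE)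
  have hG (k m : ℕ) : ∀ᵐ ω ∂μ, ω ∈ E k → ω ∈ E m → |G k ω - G m ω| ≤ ε k + ε m := by
    obtain ⟨i, hk, hm⟩ := ((hF k).and (hF m)).exists
    filter_upwards [hk, hm] with ω hωk hωm hk hm
    refine (abs_sub_le _ (F i ω) _).trans (add_le_add ?_ (hωm hm))
    rw [abs_sub_comm]
    exact hωk hk
  obtain ⟨g, hg⟩ := exists_ae_tendsto_of_forall_abs_sub_le hε hE_sum hG
  exact ⟨g, auTendsto_of_ae_tendsto hε hE_meas hE_sum hG hF hg⟩

end AlmostUniform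

section MultiparameterConvergence

variable {μ : Measure Ω} {p q : ℝ≥0∞}

theorem exists_pos_forall_measure_le_of_eLpNorm_le (hp : p ≠ 0) (hp_top : p ≠ ∞) {ε : NNReal}
    (hε : 0 < ε) : ∃ δ : NNReal, 0 < δ ∧ ∀ f : Ω → ℝ, AEStronglyMeasurable f μ →
      eLpNorm f p μ ≤ δ → μ {ω | ε ≤ f ω} ≤ ε := by
  have hp' : 0 < p.toReal := ENNReal.toReal_pos hp hp_top
  refine ⟨ε * ε ^ (1 / p.toReal), mul_pos hε (NNReal.rpow_pos hε), fun f hf hf_le => ?_⟩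
  calc μ {ω | ε ≤ f ω} ≤ μ {ω | (ε : ℝ≥0∞) ≤ ‖f ω‖ₑ} := by
        refine measure_mono fun ω hω => ?_
        change (ε : ℝ≥0∞) ≤ ‖f ω‖ₑ
        rw [← ofReal_coe_nnreal, Real.enorm_eq_ofReal_abs]
        exact ENNReal.ofReal_le_ofReal (le_trans hω (le_abs_self _))
    _ ≤ (ε : ℝ≥0∞)⁻¹ ^ p.toReal * eLpNorm f p μ ^ p.toReal :=
        meas_ge_le_mul_pow_eLpNorm_enorm μ hp hp_top hf (ENNReal.coe_ne_zero.2 hε.ne') (by simp)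
    _ ≤ (ε : ℝ≥0∞)⁻¹ ^ p.toReal * (ε * ε ^ (1 / p.toReal) : NNReal) ^ p.toReal := by gcongr
    _ = ε := by
        rw [← ENNReal.mul_rpow_of_nonneg _ _ hp'.le, ENNReal.coe_mul, ← mul_assoc,
          ENNReal.inv_mul_cancel (ENNReal.coe_ne_zero.2 hε.ne') ENNReal.coe_ne_top, one_mul,
          ← ENNReal.coe_rpow_of_nonneg _ hp'.le, ← NNReal.rpow_mul,
          one_div_mul_cancel hp'.ne', NNReal.rpow_one]

theorem L1pLinf.exists_eLpNorm_sub_le (hp : 1 ≤ p) (hp_top : p ≠ ∞) (hq : 1 ≤ q) {f : L1pLinf μ}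
    (hf : eLpNorm f p μ ≠ ∞) {ε : ℝ≥0∞} (hε : ε ≠ 0) :
    ∃ g : L1pLinf μ, eLpNorm g q μ ≠ ∞ ∧ eLpNorm ⇑(f - g) p μ ≤ ε := by
  obtain ⟨s, hs, hsp⟩ :=
    MemLp.exists_simpleFunc_eLpNorm_sub_lt ⟨f.1.aestronglyMeasurable, hf.lt_top⟩ hp_top hε
  have hsq : MemLp s q μ := by
    obtain rfl | hq_top := eq_or_ne q ∞
    · exact s.memLp_top μ
    · rw [SimpleFunc.memLp_iff (zero_lt_one.trans_le hq).ne' hq_top]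
      exact (SimpleFunc.memLp_iff (zero_lt_one.trans_le hp).ne' hp_top).1 hsp
  obtain ⟨g, hg⟩ := L1pLinf.exists_ae_eq_of_memLp hq hsq
  refine ⟨g, (eLpNorm_congr_ae hg).trans_ne hsq.2.ne, (eLpNorm_congr_ae ?_).trans_le hs.le⟩
  filter_upwards [L1pLinf.coeFn_sub f g, hg] with ω h₁ h₂
  rw [h₁, Pi.sub_apply, Pi.sub_apply, h₂]

theorem exists_auTendsto_of_forall_exists_majorant {ι : Type*} {l : Filter ι} [l.NeBot]
    (hp : p ≠ 0) (hp_top : p ≠ ∞) (hq : q ≠ 0) (hq_top : q ≠ ∞) {F : ι → L1pLinf μ}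
    (h : ∀ ε : NNReal, 0 < ε → ∃ F₀ G R : L1pLinf μ, eLpNorm G p μ ≤ ε ∧ eLpNorm R q μ ≤ ε ∧
      ∀ᶠ i in l, |F i - F₀| ≤ G + R + (ε : ℝ) • 1) :
    ∃ g : Ω →ₘ[μ] ℝ, AuTendsto μ l (fun i => (F i : Ω →ₘ[μ] ℝ)) g := by
  refine exists_auTendsto_of_forall_eventually_abs_sub_le fun ε hε => ?_
  have hε₃ : 0 < ε / 3 := by positivity
  obtain ⟨δ, hδ, hG_meas⟩ := exists_pos_forall_measure_le_of_eLpNorm_le (μ := μ) hp hp_top hε₃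
  obtain ⟨η, hη, hR_meas⟩ := exists_pos_forall_measure_le_of_eLpNorm_le (μ := μ) hq hq_top hε₃
  obtain ⟨F₀, G, R, hG, hR, hF⟩ := h (min (ε / 3) (min δ η)) (lt_min hε₃ (lt_min hδ hη))
  replace hG := hG_meas G G.1.aestronglyMeasurable (hG.trans (by gcongr; simp))
  replace hR := hR_meas R R.1.aestronglyMeasurable (hR.trans (by gcongr; simp))
  refine ⟨F₀, ({ω | ↑(ε / 3) ≤ G ω} ∪ {ω | ↑(ε / 3) ≤ R ω})ᶜ, ?_, ?_, ?_⟩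
  · exact ((measurableSet_le measurable_const G.1.measurable).union
      (measurableSet_le measurable_const R.1.measurable)).compl
  · rw [compl_compl]
    calc _ ≤ ((ε / 3 : NNReal) : ℝ≥0∞) + (ε / 3 : NNReal) :=
          (measure_union_le _ _).trans (add_le_add hG hR)
      _ ≤ ε := by
          rw [← ENNReal.coe_add, ENNReal.coe_le_coe, ← NNReal.coe_le_coe]
          push_cast
          linarith [ε.coe_nonneg]
  · refine hF.mono fun i hi => ?_
    filter_upwards [L1pLinf.coeFn_le.2 hi, L1pLinf.coeFn_abs (F i - F₀), L1pLinf.coeFn_sub (F i) F₀,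
      L1pLinf.coeFn_add_smul_one (G + R) (min (ε / 3) (min δ η) : NNReal), L1pLinf.coeFn_add G R]
      with ω h_le h_abs h_sub h_one h_add hω
    rw [h_abs, h_sub, h_one, h_add] at h_le
    have h_min : ((min (ε / 3) (min δ η) : NNReal) : ℝ) ≤ (ε / 3 : NNReal) :=
      NNReal.coe_le_coe.2 (min_le_left _ _)
    have hG_lt : G ω < (ε / 3 : NNReal) := not_le.1 fun h => hω (.inl h)
    have hR_lt : R ω < (ε / 3 : NNReal) := not_le.1 fun h => hω (.inr h)
    simp only [Pi.add_apply, Pi.sub_apply] at h_le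
    rw [NNReal.coe_div, NNReal.coe_ofNat] at h_min hG_lt hR_lt
    linarith

theorem exists_auTendsto_multiAverage {d : ℕ} {S : Fin d → Module.End ℝ (L1pLinf μ)}
    (hS : ∀ i, IsDunfordSchwartz (S i)) (hp : 1 < p) (hp_top : p ≠ ∞) {f : L1pLinf μ}
    (hf : eLpNorm f p μ ≠ ∞) :
    ∃ g : Ω →ₘ[μ] ℝ, AuTendsto μ atTop (fun n => (multiAverage S n f : Ω →ₘ[μ] ℝ)) g := by
  refine exists_auTendsto_of_forall_exists_majorant (zero_lt_one.trans hp).ne' hp_top two_ne_zero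
    ENNReal.ofNat_ne_top fun ε hε => ?_
  obtain ⟨δ, hδ, h_max⟩ :=
    (hasMaximalBound_multiAverage hp hp_top hS).exists_majorant_le (ENNReal.coe_ne_zero.2 hε.ne')
  obtain ⟨f', hf', hff'⟩ :=
    L1pLinf.exists_eLpNorm_sub_le hp.le hp_top one_le_two hf (ENNReal.coe_ne_zero.2 hδ.ne')
  obtain ⟨G, hG_norm, hG⟩ := h_max _ hff'
  obtain ⟨F₀, -, hF₀⟩ := exists_maximalTendsto_multiAverage hS hf'
  obtain ⟨R, hR_norm, hR⟩ := hF₀ ε hε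
  refine ⟨F₀, G, R, hG_norm, hR_norm, hR.mono fun n hn => ?_⟩
  calc |multiAverage S n f - F₀|
      = |multiAverage S n (f - f') + (multiAverage S n f' - F₀)| := by
        rw [map_sub, sub_add_sub_cancel]
    _ ≤ |multiAverage S n (f - f')| + |multiAverage S n f' - F₀| := abs_add_le _ _
    _ ≤ G + (R + (ε : ℝ) • 1) := add_le_add (hG n) hn
    _ = G + R + (ε : ℝ) • 1 := (add_assoc _ _ _).symm

theorem multiparam_au_Lp_general (μ : Measure Ω) {d : ℕ}
    (T : Fin d → (Ω →ₘ[μ] ℝ) → (Ω →ₘ[μ] ℝ)) (hT : ∀ i, IsPosDS μ (T i))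
    (p : ℝ≥0∞) (hp : 1 < p) (hp_top : p ≠ ∞) (f : Ω →ₘ[μ] ℝ) (hf : eLpNorm f p μ ≠ ∞) :
    ∃ fhat : Ω →ₘ[μ] ℝ,
      AuTendsto μ (atTop : Filter (Fin d → ℕ)) (fun n => multiAvg μ T n f) fhat := by
  choose S hS hST using fun i => (hT i).exists_isDunfordSchwartz
  lift f to L1pLinf μ using mem_L1pLinf_of_eLpNorm_ne_top hp.le hf
  simpa only [coe_multiAverage_apply hST] using exists_auTendsto_multiAverage hS hp hp_top hf

end MultiparameterConvergence

/-- **Commutative case of Theorem 5.1**: for commuting positive Dunford–Schwartz operators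
`T₁,…,T_d` on a σ-finite measure space and `1 < p ≤ 2`, the multiparameter averages
`A_n(f)` converge almost uniformly, unrestrictedly as `n = (n₁,…,n_d) → ∞`,
for every `f ∈ L^p(μ)`. -/
theorem multiparam_au_Lp (μ : Measure Ω) [SigmaFinite μ] {d : ℕ}
    (T : Fin d → (Ω →ₘ[μ] ℝ) → (Ω →ₘ[μ] ℝ)) (hT : ∀ i, IsPosDS μ (T i))
    (hcomm : ∀ i j, ∀ f : Ω →ₘ[μ] ℝ, MemL1pLinf μ f → T i (T j f) = T j (T i f))
    (p : ℝ≥0∞) (hp1 : 1 < p) (hp2 : p ≤ 2)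
    (f : Ω →ₘ[μ] ℝ) (hf : eLpNorm f p μ ≠ ∞) :
    ∃ fhat : Ω →ₘ[μ] ℝ,
      AuTendsto μ (atTop : Filter (Fin d → ℕ)) (fun n => multiAvg μ T n f) fhat :=
  multiparam_au_Lp_general μ T hT p hp1 (ne_top_of_le_ne_top ENNReal.ofNat_ne_top hp2) f hf
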